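/- Assume that P(A_+(e_j)) ∈ {0,1} for each standard basis vector e_j, j = 1,…,d. Then there exists a deterministic vector v ∈ R^d such that P-almost surely lim_{n→∞} X_n/n = v. -/

import Mathlib

/-!
It suffices to show that each coordinate `Z (X_n) / n` converges almost surely to a constant
(`exists_speed`); the argument applies to any additive `Z : ℤ^d → ℤ` that changes by at most one in
each step. Let `H = {Z ≥ 0}`, and let `p` and `p'` be the annealed probabilities that the walk stays
forever in `H` and in `{Z ≤ 0}`. The basic tool is `fresh_cyl`: when the walk sits at a point whose
translate of `H` it has not visited before, its future inside this translate is independent of the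
past. Hence, if `p > 0` and `Z` is unbounded above, some record of `Z` is followed by a path that
never goes below it (`ae_exists_regen`, by a version of Lévy's zero-one law). On the other hand, if
`p = 0`, then almost surely the walk attains no minimum of `Z`, so `Z` is unbounded below. Moreover,
boundedness of `Z` has probability zero or one: if it is possible, then the walk can stay forever in
some slab `{0 ≤ Z ≤ L}`, and if `Z` were unbounded above, the walk would do so after some record
(`ae_bddAbove_of_bounded`). This yields `behaviour`: almost surely `Z` is bounded, or `Z → ∞` with
positive probability, or `Z → -∞` almost surely, or `p = p' = 0`. The `0`-`1` assumption upgrades the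
second possibility to `Z → ∞` almost surely.

*Transient case.* If `Z → ∞` almost surely, there are infinitely many regeneration times `τ_k`:
strict records of `Z` below which the path never falls again. The increments of `τ` and of `Z` between
them are identically distributed and pairwise independent (`renewal`, `indep_inc`). The mean height
of an increment is finite: the events that a given level is a regeneration level followed by a high
increment are disjoint for suitable levels, and the number of levels bounds the total probability
(`integrable_height`). The strong law of large numbers then gives the speed, the time increments
being allowed to have infinite mean (`exists_rate`, `exists_speed_of_transient`).

*Case `p = p' = 0`.* Here `Z (X_n) / n → 0` (`ae_eventually_mul_le`, applied to `Z` and `-Z`). Fix a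
level `m` and consider the successive entries into `{Z ≥ m}`. The `k`-th excursion above `m` starts
at a point whose surroundings are unseen, or else were visited by an earlier excursion. In the first
case a long excursion is unlikely, because `p = 0`. In the second case, by induction on `k`, the
earlier excursion was short, so it was entered near the present entry point; and a long stay from
one of the finitely many points near an earlier entry point is again unlikely by induction
(`exists_entStay_le`). These bounds are uniform given the path up to the first hitting of `m`.
Consequently, the passage from level `m` to level `m + L`, which requires an excursion of length at
least `L`, takes place only after many entries at level `m`, except with small probability. As
strips `[m, m + L)` that follow one another are dealt with successively, the exceptional strips
have small density (`ae_eventually_few_Fast`), and counting one time step for every entry shows that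
climbing to height `h` takes at least `c h` steps, for every constant `c`.
-/

open MeasureTheory Filter Set Topology
open scoped Classical ENNReal

noncomputable section

/-- Lattice sites of `ℤ^d`. -/
abbrev Site (d : ℕ) := Fin d → ℤ

/-- The `2d` unit vectors `±e_i` of `ℤ^d`, indexed by `Fin d × Bool`
(`true` for `+e_i`, `false` for `-e_i`). -/
def stepVec (d : ℕ) (i : Fin d × Bool) : Site d :=
  if i.2 = true then Pi.single i.1 1 else -Pi.single i.1 1

/-- An element of `𝒫`: a probability measure on the set `E` of unit vectors of `ℤ^d`,
recorded via its probability mass function on lattice vectors. -/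
structure EnvDist (d : ℕ) where
  prob : Site d → ℝ
  nonneg : ∀ v, 0 ≤ prob v
  support : ∀ v, prob v ≠ 0 → ∃ i, v = stepVec d i
  total : ∑ i : Fin d × Bool, prob (stepVec d i) = 1

instance {d : ℕ} : MeasurableSpace (EnvDist d) :=
  MeasurableSpace.comap EnvDist.prob inferInstance

/-- Environments: an element of `𝒫` at every site. -/
abbrev EnvOmega (d : ℕ) := Site d → EnvDist d

/-- Path space for the walk. -/
abbrev PathSpace (d : ℕ) := ℕ → Site d

/-- Sample space for the annealed walk: environment together with path. -/
abbrev RWSpace (d : ℕ) := EnvOmega d × PathSpace d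

/-- Dot product of a lattice vector with a real vector. -/
def dotR {d : ℕ} (x : Site d) (l : Fin d → ℝ) : ℝ := ∑ i, (x i : ℝ) * l i

/-- Dot product of two lattice vectors. -/
def dotZ {d : ℕ} (x y : Site d) : ℤ := ∑ i, x i * y i

/-- Quenched probability that the walk follows the steps of `x` for its first `n` steps. -/
def pathWeight {d : ℕ} (ω : EnvOmega d) (n : ℕ) (x : ℕ → Site d) : ℝ :=
  ∏ k ∈ Finset.range n, (ω (x k)).prob (x (k + 1) - x k)

/-- `ν` is the product measure `μ^{⊗ℤ^d}`, i.e. the coordinates are i.i.d. with law `μ`. -/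
def IsIIDEnv {d : ℕ} (μ : Measure (EnvDist d)) (ν : Measure (EnvOmega d)) : Prop :=
  IsProbabilityMeasure μ ∧ IsProbabilityMeasure ν ∧
    ∀ (s : Finset (Site d)) (A : Site d → Set (EnvDist d)),
      (∀ x ∈ s, MeasurableSet (A x)) →
      ν {ω | ∀ x ∈ s, ω x ∈ A x} = ∏ x ∈ s, μ (A x)

/-- `P` is the annealed law of the RWRE started at the origin in an i.i.d. environment
with marginal `μ`: the environment marginal is the i.i.d. product, and the cylinder
probabilities are given by averaging the quenched Markov-chain probabilities. -/
def IsRWRE {d : ℕ} (μ : Measure (EnvDist d)) (P : Measure (RWSpace d)) : Prop :=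
  IsProbabilityMeasure P ∧ IsIIDEnv μ (P.map Prod.fst) ∧
    ∀ (n : ℕ) (x : ℕ → Site d) (A : Set (EnvOmega d)), MeasurableSet A →
      (P {q | q.1 ∈ A ∧ ∀ k ≤ n, q.2 k = x k}).toReal =
        (if x 0 = 0 then (1 : ℝ) else 0) * ∫ ω in A, pathWeight ω n x ∂(P.map Prod.fst)

/-- `Q` is the quenched law `ℙ_ω` of the walk in the fixed environment `ω`, started at the
origin. -/
def IsQuenchedRW {d : ℕ} (ω : EnvOmega d) (Q : Measure (PathSpace d)) : Prop :=
  IsProbabilityMeasure Q ∧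
    ∀ (n : ℕ) (x : ℕ → Site d),
      (Q {w | ∀ k ≤ n, w k = x k}).toReal =
        (if x 0 = 0 then (1 : ℝ) else 0) * pathWeight ω n x

/-- `x → y`: there is a directed path from `x` to `y` in the graph `G(ω)`. -/
def Reaches {d : ℕ} (ω : EnvOmega d) : Site d → Site d → Prop :=
  Relation.ReflTransGen (fun a b => 0 < (ω a).prob (b - a))

/-- The forward cluster `C_x`. -/
def clusterC {d : ℕ} (ω : EnvOmega d) (x : Site d) : Set (Site d) := {y | Reaches ω x y}

/-- The mutually connected cluster `M_x = C_x ∩ B_x`. -/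
def clusterM {d : ℕ} (ω : EnvOmega d) (x : Site d) : Set (Site d) :=
  {y | Reaches ω x y ∧ Reaches ω y x}

/-- The local drift `u = ∑_e γ(e) e` of an environment value `γ`. -/
def drift {d : ℕ} (γ : EnvDist d) : Fin d → ℝ :=
  fun i => ∑ k : Fin d × Bool, γ.prob (stepVec d k) * ((stepVec d k i : ℤ) : ℝ)

/-- `N_n`: the number of times before time `n` at which the walk sits on a site whose
environment equals `γ`. -/
def envCount {d : ℕ} (γ : EnvDist d) (q : RWSpace d) (n : ℕ) : ℕ :=
  Set.ncard {m : ℕ | m < n ∧ q.1 (q.2 m) = γ}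

end

open ProbabilityTheory

/-! ### The i.i.d. environment -/

noncomputable section Env

variable {d : ℕ}

lemma measurable_envProb (v : Site d) : Measurable fun γ : EnvDist d => γ.prob v :=
  (measurable_pi_apply v).comp (comap_measurable EnvDist.prob)

lemma measurable_omegaProb (x v : Site d) : Measurable fun ω : EnvOmega d => (ω x).prob v :=
  (measurable_envProb v).comp (measurable_pi_apply x)

/-- The finite-dimensional distributions in `IsIIDEnv` characterise the product measure. -/
lemma isIIDEnv_eq_infinitePi {μ : Measure (EnvDist d)} [IsProbabilityMeasure μ]
    {ν : Measure (EnvOmega d)} (h : IsIIDEnv μ ν) : ν = Measure.infinitePi fun _ => μ := by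
  refine Measure.eq_infinitePi _ fun s t ht => ?_
  have := h.2.2 s t fun x _ => ht x
  rw [← this]
  rfl

/-- The environment is stationary under spatial translations. -/
lemma map_shift_env {μ : Measure (EnvDist d)} {ν : Measure (EnvOmega d)} (h : IsIIDEnv μ ν)
    (x : Site d) : ν.map (fun ω z => ω (z + x)) = ν := by
  have hμ := h.1
  have hm : Measurable fun (ω : EnvOmega d) (z : Site d) => ω (z + x) :=
    measurable_pi_lambda _ fun z => measurable_pi_apply _
  conv_rhs => rw [isIIDEnv_eq_infinitePi h]
  refine Measure.eq_infinitePi _ fun s t ht => ?_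
  rw [Measure.map_apply hm (MeasurableSet.pi s.countable_toSet fun i _ => ht i)]
  have := h.2.2 (s.map (addRightEmbedding x)) (fun z => t (z - x)) fun z _ => ht _
  simp only [Finset.mem_map, addRightEmbedding_apply, forall_exists_index, and_imp,
    forall_apply_eq_imp_iff₂, add_sub_cancel_right, Finset.prod_map] at this
  rw [← this]
  rfl

/-- Functions of the environment on disjoint finite sets of sites are independent. -/
lemma lintegral_mul_of_dependsOn {μ : Measure (EnvDist d)} {ν : Measure (EnvOmega d)}
    (h : IsIIDEnv μ ν) {S T : Finset (Site d)} (hST : Disjoint S T) {f g : EnvOmega d → ℝ≥0∞}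
    (hf : Measurable f) (hg : Measurable g)
    (hfS : DependsOn f (S : Set (Site d))) (hgT : DependsOn g (T : Set (Site d))) :
    ∫⁻ ω, f ω * g ω ∂ν = (∫⁻ ω, f ω ∂ν) * ∫⁻ ω, g ω ∂ν := by
  have hμ := h.1
  have hν := h.2.1
  obtain ⟨ω₀⟩ : Nonempty (EnvOmega d) := ν.nonempty_of_neZero
  have key : ∀ (U : Finset (Site d)) (k : EnvOmega d → ℝ≥0∞), Measurable k →
      DependsOn k (U : Set (Site d)) → ∃ K : (U → EnvDist d) → ℝ≥0∞, Measurable K ∧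
        k = K ∘ fun ω (i : U) => ω i := by
    intro U k hk hkU
    refine ⟨fun η => k fun z => if hz : z ∈ U then η ⟨z, hz⟩ else ω₀ z, hk.comp ?_, ?_⟩
    · refine measurable_pi_lambda _ fun z => ?_
      by_cases hz : z ∈ U
      · simpa [hz] using measurable_pi_apply _
      · simp [hz]
    · funext ω
      refine hkU fun z hz => ?_
      simp [Finset.mem_coe.1 hz]
  obtain ⟨F, hF, rfl⟩ := key S f hf hfS
  obtain ⟨G, hG, rfl⟩ := key T g hg hgT
  refine lintegral_mul_eq_lintegral_mul_lintegral_of_indepFun hf hg ?_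
  refine IndepFun.comp ?_ hF hG
  refine iIndepFun.indepFun_finset (f := fun (i : Site d) (ω : EnvOmega d) => ω i) S T hST ?_
    fun i => measurable_pi_apply i
  rw [isIIDEnv_eq_infinitePi h]
  exact iIndepFun_infinitePi (P := fun _ : Site d => μ) (X := fun _ γ => γ) fun _ => measurable_id

lemma stepVec_injective : Function.Injective (stepVec d) := by
  rintro ⟨i, a⟩ ⟨j, b⟩ hij
  simp only [stepVec] at hij
  have h1 := congrFun hij i
  have h2 := congrFun hij j
  by_cases e : i = j
  · subst e
    cases a <;> cases b <;> simp at h1 ⊢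
  · cases a <;> cases b <;> simp [e] at h1

lemma abs_stepVec_le (i : Fin d × Bool) (j : Fin d) : |stepVec d i j| ≤ 1 := by
  obtain ⟨i, b⟩ := i
  by_cases e : j = i
  · subst e; cases b <;> simp [stepVec]
  · cases b <;> simp [stepVec, e]

/-- The one-step transition weight, valued in `ℝ≥0∞`. -/
def stepW (ω : EnvOmega d) (y : Site d) (i : Fin d × Bool) : ℝ≥0∞ :=
  ENNReal.ofReal ((ω y).prob (stepVec d i))

/-- `pathWeight`, valued in `ℝ≥0∞`. -/
def wE (ω : EnvOmega d) (n : ℕ) (x : ℕ → Site d) : ℝ≥0∞ := ENNReal.ofReal (pathWeight ω n x)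

lemma measurable_stepW (y : Site d) (i : Fin d × Bool) :
    Measurable fun ω : EnvOmega d => stepW ω y i :=
  (measurable_omegaProb y _).ennreal_ofReal

lemma sum_stepW (ω : EnvOmega d) (y : Site d) : ∑ i, stepW ω y i = 1 := by
  unfold stepW
  rw [← ENNReal.ofReal_sum_of_nonneg fun i _ => (ω y).nonneg _, (ω y).total, ENNReal.ofReal_one]

lemma envProb_le_one (γ : EnvDist d) (v : Site d) : γ.prob v ≤ 1 := by
  by_cases hv : γ.prob v = 0
  · simp [hv]
  · obtain ⟨i, rfl⟩ := γ.support v hv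
    rw [← γ.total]
    exact Finset.single_le_sum (f := fun i => γ.prob (stepVec d i)) (fun i _ => γ.nonneg _)
      (Finset.mem_univ i)

lemma measurable_pathWeight (n : ℕ) (x : ℕ → Site d) :
    Measurable fun ω : EnvOmega d => pathWeight ω n x :=
  Finset.measurable_prod _ fun _ _ => measurable_omegaProb _ _

lemma pathWeight_nonneg (ω : EnvOmega d) (n : ℕ) (x : ℕ → Site d) : 0 ≤ pathWeight ω n x :=
  Finset.prod_nonneg fun _ _ => (ω _).nonneg _

lemma pathWeight_le_one (ω : EnvOmega d) (n : ℕ) (x : ℕ → Site d) : pathWeight ω n x ≤ 1 :=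
  Finset.prod_le_one (fun _ _ => (ω _).nonneg _) fun _ _ => envProb_le_one _ _

lemma measurable_wE (n : ℕ) (x : ℕ → Site d) : Measurable fun ω : EnvOmega d => wE ω n x :=
  (measurable_pathWeight n x).ennreal_ofReal

lemma wE_le_one (ω : EnvOmega d) (n : ℕ) (x : ℕ → Site d) : wE ω n x ≤ 1 :=
  ENNReal.ofReal_le_one.2 (pathWeight_le_one ω n x)

lemma wE_dependsOn (n : ℕ) (x : ℕ → Site d) :
    DependsOn (fun ω : EnvOmega d => wE ω n x)
      (((Finset.range n).image x : Finset (Site d)) : Set (Site d)) := by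
  intro ω ω' h
  simp only [wE, pathWeight]
  congr 1
  refine Finset.prod_congr rfl fun k hk => ?_
  rw [h (x k) (Finset.mem_coe.2 (Finset.mem_image_of_mem x hk))]

lemma pathWeight_congr (ω : EnvOmega d) {n : ℕ} {x y : ℕ → Site d} (h : ∀ k ≤ n, x k = y k) :
    pathWeight ω n x = pathWeight ω n y := by
  refine Finset.prod_congr rfl fun k hk => ?_
  rw [h k (Finset.mem_range.1 hk).le, h (k + 1) (Finset.mem_range.1 hk)]

/-- `stayW n K ω y` is the quenched probability that the walk in `ω` started at `y` is in `K u` at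
every time `u ≤ n`. -/
def stayW : ℕ → (ℕ → Set (Site d)) → EnvOmega d → Site d → ℝ≥0∞
  | 0, K, _, y => if y ∈ K 0 then 1 else 0
  | n + 1, K, ω, y =>
    if y ∈ K 0 then ∑ i, stepW ω y i * stayW n (fun u => K (u + 1)) ω (y + stepVec d i) else 0

lemma measurable_stayW (n : ℕ) (K : ℕ → Set (Site d)) (y : Site d) :
    Measurable fun ω : EnvOmega d => stayW n K ω y := by
  induction n generalizing K y with
  | zero => simp only [stayW]; exact measurable_const
  | succ n ih =>
    simp only [stayW]
    by_cases hy : y ∈ K 0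
    · simp only [hy, if_true]
      exact Finset.measurable_sum _ fun i _ => (measurable_stepW y i).mul (ih _ _)
    · simp only [hy, if_false]; exact measurable_const

lemma stayW_le_one (n : ℕ) (K : ℕ → Set (Site d)) (ω : EnvOmega d) (y : Site d) :
    stayW n K ω y ≤ 1 := by
  induction n generalizing K y with
  | zero => simp only [stayW]; split_ifs <;> simp
  | succ n ih =>
    simp only [stayW]
    split_ifs
    · rw [← sum_stepW ω y]
      exact Finset.sum_le_sum fun i _ => mul_le_of_le_one_right' (ih _ _)
    · simp

lemma stayW_succ_le (n : ℕ) (K : ℕ → Set (Site d)) (ω : EnvOmega d) (y : Site d) :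
    stayW (n + 1) K ω y ≤ stayW n K ω y := by
  induction n generalizing K y with
  | zero =>
    by_cases hy : y ∈ K 0
    · exact (stayW_le_one _ _ _ _).trans (by simp [stayW, hy])
    · simp [stayW, hy]
  | succ n ih =>
    rw [stayW]
    conv_rhs => rw [stayW]
    split_ifs
    · exact Finset.sum_le_sum fun i _ => by gcongr; exact ih _ _
    · exact le_rfl

lemma stayW_antitone (K : ℕ → Set (Site d)) (ω : EnvOmega d) (y : Site d) :
    Antitone fun n => stayW n K ω y :=
  antitone_nat_of_succ_le fun n => stayW_succ_le n K ω y

/-- The cube of radius `n` around `y`. -/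
def cube (y : Site d) (n : ℕ) : Finset (Site d) :=
  Finset.Icc (fun j => y j - n) (fun j => y j + n)

lemma mem_cube {y z : Site d} {n : ℕ} : z ∈ cube y n ↔ ∀ j, |z j - y j| ≤ n := by
  simp only [cube, Finset.mem_Icc, Pi.le_def, ← forall_and, abs_le]
  refine forall_congr' fun j => ?_
  constructor <;> rintro ⟨a, b⟩ <;> constructor <;> omega

lemma cube_step_subset (y : Site d) (n : ℕ) (i : Fin d × Bool) :
    cube (y + stepVec d i) n ⊆ cube y (n + 1) := by
  intro z hz
  rw [mem_cube] at hz ⊢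
  intro j
  have h1 := hz j
  have h2 := abs_stepVec_le i j
  simp only [Pi.add_apply] at h1
  rw [abs_le] at h1 h2 ⊢
  push_cast
  constructor <;> linarith [h1.1, h1.2, h2.1, h2.2]

lemma stayW_dependsOn (n : ℕ) (K : ℕ → Set (Site d)) (y : Site d) :
    DependsOn (fun ω : EnvOmega d => stayW n K ω y)
      (((cube y n).filter fun z => ∃ u, z ∈ K u : Finset (Site d)) : Set (Site d)) := by
  intro ω ω' h
  induction n generalizing K y with
  | zero => simp [stayW]
  | succ n ih =>
    simp only [stayW]
    by_cases hy : y ∈ K 0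
    · simp only [hy, if_true]
      refine Finset.sum_congr rfl fun i _ => ?_
      have e1 : ω y = ω' y := h y (by
        simp only [Finset.coe_filter, mem_ofPred_eq, mem_cube]
        exact ⟨fun j => by simp; omega, 0, hy⟩)
      have e2 := ih (fun u => K (u + 1)) (y + stepVec d i) (fun z hz => h z (by
        simp only [Finset.coe_filter, mem_ofPred_eq] at hz ⊢
        exact ⟨cube_step_subset y n i hz.1, hz.2.elim fun u hu => ⟨u + 1, hu⟩⟩))
      simp only at e2
      rw [e2, stepW, stepW, e1]
    · simp [hy]

lemma stayW_shift (n : ℕ) (K : ℕ → Set (Site d)) (ω : EnvOmega d) (x y : Site d) :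
    stayW n K ω (y + x) = stayW n (fun u => {z | z + x ∈ K u}) (fun z => ω (z + x)) y := by
  induction n generalizing K y with
  | zero => simp [stayW]
  | succ n ih =>
    simp only [stayW, mem_ofPred_eq]
    congr 1
    refine Finset.sum_congr rfl fun i _ => ?_
    rw [add_right_comm, ih]
    rfl

lemma lintegral_stayW_shift {μ : Measure (EnvDist d)} {ν : Measure (EnvOmega d)}
    (h : IsIIDEnv μ ν) (n : ℕ) (K : ℕ → Set (Site d)) (y : Site d) :
    ∫⁻ ω, stayW n K ω y ∂ν = ∫⁻ ω, stayW n (fun u => {z | z + y ∈ K u}) ω 0 ∂ν := by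
  have hm : Measurable fun (ω : EnvOmega d) (z : Site d) => ω (z + y) :=
    measurable_pi_lambda _ fun z => measurable_pi_apply _
  have e := lintegral_map (μ := ν)
    (measurable_stayW n (fun u => {z | z + y ∈ K u}) (0 : Site d)) hm
  rw [map_shift_env h y] at e
  rw [e]
  refine lintegral_congr fun ω => ?_
  have := stayW_shift n K ω y 0
  rwa [zero_add] at this

end Env

/-! ### Cylinders and the Markov property -/

noncomputable section Paths

variable {d : ℕ}

/-- The paths that agree with `x` up to time `n`. -/
def cyl (n : ℕ) (x : PathSpace d) : Set (PathSpace d) := {w | ∀ k ≤ n, w k = x k}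

/-- The event `A` is determined by the path up to time `n`. -/
def Det (n : ℕ) (A : Set (PathSpace d)) : Prop :=
  ∀ w w' : PathSpace d, (∀ k ≤ n, w k = w' k) → w ∈ A → w' ∈ A

/-- The extension by `0` of a finite path. -/
def extPath (n : ℕ) (γ : Fin (n + 1) → Site d) : PathSpace d :=
  fun k => if h : k < n + 1 then γ ⟨k, h⟩ else 0

lemma measurable_coord (k : ℕ) : Measurable fun w : PathSpace d => w k := measurable_pi_apply k

lemma measurableSet_coord (k : ℕ) (S : Set (Site d)) : MeasurableSet {w : PathSpace d | w k ∈ S} :=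
  measurable_coord k (MeasurableSet.of_discrete)

lemma measurableSet_cyl (n : ℕ) (x : PathSpace d) : MeasurableSet (cyl n x) := by
  have : cyl n x = ⋂ k ∈ Set.Iic n, {w : PathSpace d | w k ∈ ({x k} : Set (Site d))} := by
    ext w; simp [cyl]
  rw [this]
  exact MeasurableSet.biInter (Set.to_countable _) fun k _ => measurableSet_coord k _

lemma Det.eq_iUnion {n : ℕ} {A : Set (PathSpace d)} (hA : Det n A) :
    A = ⋃ γ : {γ : Fin (n + 1) → Site d // extPath n γ ∈ A}, cyl n (extPath n γ.1) := by
  ext w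
  simp only [mem_iUnion]
  constructor
  · intro hw
    have hc : ∀ k ≤ n, w k = extPath n (fun i : Fin (n + 1) => w i) k := fun k hk => by
      simp [extPath, Nat.lt_succ_of_le hk]
    exact ⟨⟨fun i => w i, hA w _ hc hw⟩, hc⟩
  · rintro ⟨γ, hγ⟩
    exact hA _ w (fun k hk => (hγ k hk).symm) γ.2

lemma Det.measurableSet {n : ℕ} {A : Set (PathSpace d)} (hA : Det n A) : MeasurableSet A := by
  rw [hA.eq_iUnion]
  exact MeasurableSet.iUnion fun γ => measurableSet_cyl _ _

lemma Det.measure_eq_tsum {n : ℕ} {A : Set (PathSpace d)} (hA : Det n A)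
    (ρ : Measure (PathSpace d)) :
    ρ A = ∑' γ : {γ : Fin (n + 1) → Site d // extPath n γ ∈ A}, ρ (cyl n (extPath n γ.1)) := by
  conv_lhs => rw [hA.eq_iUnion]
  refine measure_iUnion ?_ fun γ => measurableSet_cyl _ _
  intro γ γ' hne
  refine Set.disjoint_left.2 fun w hw hw' => hne ?_
  ext1
  funext i
  have h1 := hw i (Nat.lt_succ_iff.1 i.2)
  have h2 := hw' i (Nat.lt_succ_iff.1 i.2)
  rw [h1] at h2
  simpa [extPath, Nat.lt_succ_iff.1 i.2] using h2

lemma Det.measure_le {n : ℕ} {A : Set (PathSpace d)} (hA : Det n A)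
    {ρ₁ ρ₂ : Measure (PathSpace d)} (h : ∀ x ∈ A, ρ₁ (cyl n x) ≤ ρ₂ (cyl n x)) : ρ₁ A ≤ ρ₂ A := by
  rw [hA.measure_eq_tsum, hA.measure_eq_tsum]
  exact ENNReal.tsum_le_tsum fun γ => h _ γ.2

lemma Det.measure_eq {n : ℕ} {A : Set (PathSpace d)} (hA : Det n A)
    {ρ₁ ρ₂ : Measure (PathSpace d)} (h : ∀ x ∈ A, ρ₁ (cyl n x) = ρ₂ (cyl n x)) : ρ₁ A = ρ₂ A :=
  le_antisymm (hA.measure_le fun x hx => (h x hx).le) (hA.measure_le fun x hx => (h x hx).ge)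

lemma Det.inter {n : ℕ} {A B : Set (PathSpace d)} (hA : Det n A) (hB : Det n B) :
    Det n (A ∩ B) := fun w w' h hw => ⟨hA w w' h hw.1, hB w w' h hw.2⟩

/-- The paths staying in `K u` at each time `u ≤ n`. -/
def box (n : ℕ) (K : ℕ → Set (Site d)) : Set (PathSpace d) := {w | ∀ u ≤ n, w u ∈ K u}

/-- The paths that always stay in `H`. -/
def Stay (H : Set (Site d)) : Set (PathSpace d) := {w | ∀ u, w u ∈ H}

lemma measurableSet_box (n : ℕ) (K : ℕ → Set (Site d)) : MeasurableSet (box n K) := by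
  have : box n K = ⋂ k ∈ Set.Iic n, {w : PathSpace d | w k ∈ K k} := by
    ext w; simp [box]
  rw [this]
  exact MeasurableSet.biInter (Set.to_countable _) fun k _ => measurableSet_coord k _

lemma measurableSet_Stay (H : Set (Site d)) : MeasurableSet (Stay H) := by
  have : Stay H = ⋂ k, {w : PathSpace d | w k ∈ H} := by
    ext w; simp [Stay]
  rw [this]
  exact MeasurableSet.iInter fun k => measurableSet_coord k _

lemma box_antitone (K : ℕ → Set (Site d)) : Antitone fun n => box n K :=
  fun _ _ hmn _ hw u hu => hw u (hu.trans hmn)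

lemma tendsto_measure_box (ρ : Measure (PathSpace d)) [IsFiniteMeasure ρ] (K : ℕ → Set (Site d)) :
    Tendsto (fun n => ρ (box n K)) atTop (𝓝 (ρ {w | ∀ u, w u ∈ K u})) := by
  have : {w : PathSpace d | ∀ u, w u ∈ K u} = ⋂ n, box n K := by
    ext w; simp only [box, mem_ofPred_eq, mem_iInter]
    exact ⟨fun h n u _ => h u, fun h u => h u u le_rfl⟩
  rw [this]
  exact tendsto_measure_iInter_atTop (fun n => (measurableSet_box n K).nullMeasurableSet)
    (box_antitone K) ⟨0, measure_ne_top _ _⟩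

/-- Two finite path measures that agree on all boxes inside `H` agree on all events contained in
`Stay H`. -/
lemma box_ext {ρ₁ ρ₂ : Measure (PathSpace d)} [IsFiniteMeasure ρ₁] [IsFiniteMeasure ρ₂]
    {H : Set (Site d)}
    (h : ∀ K : ℕ → Set (Site d), (∀ u, K u ⊆ H) → ∀ n, ρ₁ (box n K) = ρ₂ (box n K))
    {B : Set (PathSpace d)} (hB : MeasurableSet B) : ρ₁ (B ∩ Stay H) = ρ₂ (B ∩ Stay H) := by
  have hS := measurableSet_Stay H
  have full : ∀ K : ℕ → Set (Site d), ρ₁ ({w | ∀ u, w u ∈ K u} ∩ Stay H) =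
      ρ₂ ({w | ∀ u, w u ∈ K u} ∩ Stay H) := by
    intro K
    have e : {w : PathSpace d | ∀ u, w u ∈ K u} ∩ Stay H = {w | ∀ u, w u ∈ K u ∩ H} := by
      ext w
      simp only [Stay, mem_inter_iff, mem_ofPred_eq, forall_and]
    rw [e]
    refine tendsto_nhds_unique (tendsto_measure_box ρ₁ fun u => K u ∩ H) ?_
    simp_rw [h (fun u => K u ∩ H) fun u => inter_subset_right]
    exact tendsto_measure_box ρ₂ _
  have : ρ₁.restrict (Stay H) = ρ₂.restrict (Stay H) := by
    refine ext_of_generate_finite _ generateFrom_squareCylinders.symm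
      (isPiSystem_squareCylinders (fun _ => MeasurableSpace.isPiSystem_measurableSet) (by simp)) ?_ ?_
    · rintro _ ⟨s, t, ht, rfl⟩
      have e : (s : Set ℕ).pi t = {w | ∀ u, w u ∈ (if u ∈ s then t u else univ)} := by
        ext w
        simp only [Set.mem_pi, Finset.mem_coe, mem_ofPred_eq]
        refine forall_congr' fun u => ?_
        by_cases hu : u ∈ s <;> simp [hu]
      have hm : MeasurableSet ((s : Set ℕ).pi t) :=
        MeasurableSet.pi (Set.to_countable _) fun i _ => MeasurableSet.of_discrete
      rw [Measure.restrict_apply hm, Measure.restrict_apply hm, e]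
      exact full _
    · simpa using full fun _ => univ
  rw [← Measure.restrict_apply hB, ← Measure.restrict_apply hB, this]

/-- The path seen from its position at time `N`. -/
def shiftP (N : ℕ) (w : PathSpace d) : PathSpace d := fun k => w (N + k) - w N

lemma measurable_shiftP (N : ℕ) : Measurable (shiftP N : PathSpace d → PathSpace d) :=
  measurable_pi_lambda _ fun k => (measurable_coord (N + k)).sub (measurable_coord N)

end Paths

noncomputable section Walk

variable {d : ℕ} {μ : Measure (EnvDist d)} {P : Measure (RWSpace d)}

/-- The annealed law of the path. -/
def pathLaw (P : Measure (RWSpace d)) : Measure (PathSpace d) := P.map Prod.snd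

lemma isProb_pathLaw (hP : IsRWRE μ P) : IsProbabilityMeasure (pathLaw P) :=
  haveI := hP.1
  Measure.isProbabilityMeasure_map measurable_snd.aemeasurable

lemma pathLaw_apply {A : Set (PathSpace d)} (hA : MeasurableSet A) :
    pathLaw P A = P {q | q.2 ∈ A} := Measure.map_apply measurable_snd hA

lemma measurableSet_snd {A : Set (PathSpace d)} (hA : MeasurableSet A) :
    MeasurableSet {q : RWSpace d | q.2 ∈ A} := measurable_snd hA

lemma setLIntegral_cyl (hP : IsRWRE μ P) (N : ℕ) (x : PathSpace d) {f : EnvOmega d → ℝ≥0∞}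
    (hf : Measurable f) :
    ∫⁻ q in {q | q.2 ∈ cyl N x}, f q.1 ∂P =
      (if x 0 = 0 then 1 else 0) * ∫⁻ ω, wE ω N x * f ω ∂(P.map Prod.fst) := by
  have := hP.1
  have hν := hP.2.1.2.1
  have hS := measurableSet_snd (measurableSet_cyl N x)
  have key : (P.restrict {q | q.2 ∈ cyl N x}).map Prod.fst =
      (if x 0 = 0 then (1 : ℝ≥0∞) else 0) •
        (P.map Prod.fst).withDensity (fun ω => wE ω N x) := by
    ext A hA
    rw [Measure.map_apply measurable_fst hA, Measure.restrict_apply (measurable_fst hA),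
      Measure.smul_apply, withDensity_apply _ hA, smul_eq_mul]
    have h := hP.2.2 N x A hA
    have e : Prod.fst ⁻¹' A ∩ {q : RWSpace d | q.2 ∈ cyl N x} =
      {q : RWSpace d | q.1 ∈ A ∧ ∀ k ≤ N, q.2 k = x k} := rfl
    rw [e, ← ENNReal.ofReal_toReal (measure_ne_top P _), h]
    split_ifs
    · rw [one_mul, one_mul, ofReal_integral_eq_lintegral_ofReal]
      · rfl
      · refine Integrable.of_bound (measurable_pathWeight N x).aestronglyMeasurable 1 ?_
        filter_upwards with ω
        rw [Real.norm_of_nonneg (pathWeight_nonneg _ _ _)]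
        exact pathWeight_le_one _ _ _
      · filter_upwards with ω using pathWeight_nonneg _ _ _
    · simp
  rw [← lintegral_map hf measurable_fst, key, lintegral_smul_measure,
    lintegral_withDensity_eq_lintegral_mul _ (measurable_wE N x) hf]
  rfl

lemma pathLaw_cyl (hP : IsRWRE μ P) (N : ℕ) (x : PathSpace d) :
    pathLaw P (cyl N x) = (if x 0 = 0 then 1 else 0) * ∫⁻ ω, wE ω N x ∂(P.map Prod.fst) := by
  have := setLIntegral_cyl hP N x (f := fun _ => 1) measurable_const
  simp only [mul_one, lintegral_const, Measure.restrict_apply MeasurableSet.univ, univ_inter,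
    one_mul] at this
  rw [pathLaw_apply (measurableSet_cyl N x), this]

lemma ae_start (hP : IsRWRE μ P) : ∀ᵐ w ∂pathLaw P, w 0 = 0 := by
  have hA : Det (d := d) 0 {w : PathSpace d | ¬ w 0 = 0} := fun w w' h hw => by
    rw [mem_ofPred_eq, ← h 0 le_rfl]; exact hw
  rw [ae_iff]
  refine le_antisymm ((hA.measure_le (ρ₂ := 0) fun x hx => ?_).trans (by simp)) zero_le
  rw [pathLaw_cyl hP, if_neg hx, zero_mul]; simp

lemma ae_step (hP : IsRWRE μ P) :
    ∀ᵐ w ∂pathLaw P, ∀ n, ∃ i, w (n + 1) = w n + stepVec d i := by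
  rw [ae_all_iff]
  intro n
  have hA : Det (n + 1) {w : PathSpace d | ¬ ∃ i, w (n + 1) = w n + stepVec d i} :=
    fun w w' h hw => by
      rw [mem_ofPred_eq, ← h (n + 1) le_rfl, ← h n (Nat.le_succ n)]; exact hw
  rw [ae_iff]
  refine le_antisymm ((hA.measure_le (ρ₂ := 0) fun x hx => ?_).trans (by simp)) zero_le
  rw [pathLaw_cyl hP]
  have : ∀ ω : EnvOmega d, wE ω (n + 1) x = 0 := fun ω => by
    rw [wE, pathWeight, Finset.prod_range_succ]
    have : (ω (x n)).prob (x (n + 1) - x n) = 0 := by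
      by_contra h0
      obtain ⟨i, hi⟩ := (ω (x n)).support _ h0
      exact hx ⟨i, by rw [← hi]; abel⟩
    rw [this, mul_zero, ENNReal.ofReal_zero]
  simp [this]

lemma wE_update (ω : EnvOmega d) (N : ℕ) (x : PathSpace d) (i : Fin d × Bool) :
    wE ω (N + 1) (Function.update x (N + 1) (x N + stepVec d i)) =
      wE ω N x * stepW ω (x N) i := by
  rw [wE, pathWeight, Finset.prod_range_succ, ENNReal.ofReal_mul
    (Finset.prod_nonneg fun _ _ => (ω _).nonneg _)]
  congr 1
  · rw [wE]
    congr 1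
    refine Finset.prod_congr rfl fun k hk => ?_
    have := Finset.mem_range.1 hk
    rw [Function.update_of_ne (by omega), Function.update_of_ne (by omega)]
  · rw [Function.update_self, Function.update_of_ne (by omega), add_sub_cancel_left, stepW]

/-- **Markov property**: after following `x` for `N` steps, the walk stays in the prescribed sets
with the quenched probability started from `x N`. -/
lemma markov_cyl (hP : IsRWRE μ P) (n : ℕ) (K : ℕ → Set (Site d)) (N : ℕ) (x : PathSpace d) :
    pathLaw P (cyl N x ∩ {w | ∀ u ≤ n, w (N + u) ∈ K u}) =
      (if x 0 = 0 then 1 else 0) * ∫⁻ ω, wE ω N x * stayW n K ω (x N) ∂(P.map Prod.fst) := by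
  induction n generalizing K N x with
  | zero =>
    by_cases hx : x N ∈ K 0
    · have : cyl N x ∩ {w | ∀ u ≤ 0, w (N + u) ∈ K u} = cyl N x := by
        refine inter_eq_left.2 fun w hw u hu => ?_
        obtain rfl : u = 0 := by omega
        rw [add_zero, hw N le_rfl]; exact hx
      rw [this, pathLaw_cyl hP]
      simp [stayW, hx]
    · have : cyl N x ∩ {w | ∀ u ≤ 0, w (N + u) ∈ K u} = ∅ := by
        refine eq_empty_of_forall_notMem fun w hw => hx ?_
        rw [← hw.1 N le_rfl]; exact hw.2 0 le_rfl
      rw [this]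
      simp [stayW, hx]
  | succ n ih =>
    by_cases hx : x N ∈ K 0
    · set y : Fin d × Bool → PathSpace d :=
        fun i => Function.update x (N + 1) (x N + stepVec d i) with hy
      have hyN : ∀ i, y i (N + 1) = x N + stepVec d i := fun i => Function.update_self ..
      have hyk : ∀ i, ∀ k ≤ N, y i k = x k := fun i k hk => Function.update_of_ne (by omega) ..
      set E : Fin d × Bool → Set (PathSpace d) := fun i =>
        cyl (N + 1) (y i) ∩ {w | ∀ u ≤ n, w (N + 1 + u) ∈ K (u + 1)} with hE
      have h1 : (cyl N x ∩ {w | ∀ u ≤ n + 1, w (N + u) ∈ K u} : Set (PathSpace d))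
          =ᵐ[pathLaw P] ⋃ i, E i := by
        filter_upwards [ae_step hP] with w hw
        apply propext
        change w ∈ (cyl N x ∩ {w | ∀ u ≤ n + 1, w (N + u) ∈ K u}) ↔ w ∈ ⋃ i, E i
        rw [mem_iUnion]
        constructor
        · rintro ⟨hc, hk⟩
          obtain ⟨i, hi⟩ := hw N
          refine ⟨i, fun k hk' => ?_, fun u hu => ?_⟩
          · rcases Nat.lt_or_ge N k with h | h
            · obtain rfl : k = N + 1 := by omega
              rw [hyN, hi, hc N le_rfl]
            · rw [hyk i k h, hc k h]
          · have := hk (u + 1) (by omega)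
            rwa [show N + (u + 1) = N + 1 + u by omega] at this
        · rintro ⟨i, hc, hk⟩
          have hc' : ∀ k ≤ N, w k = x k := fun k hk' => by
            rw [hc k (by omega), hyk i k hk']
          refine ⟨hc', fun u hu => ?_⟩
          rcases u with _ | u
          · rw [add_zero, hc' N le_rfl]; exact hx
          · have := hk u (by omega)
            rwa [show N + 1 + u = N + (u + 1) by omega] at this
      have hd : Pairwise (Function.onFun Disjoint E) := by
        intro i j hij
        refine Set.disjoint_left.2 fun w hw hw' => hij ?_
        have a := hw.1 (N + 1) le_rfl
        have b := hw'.1 (N + 1) le_rfl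
        rw [hyN] at a b
        rw [a] at b
        exact stepVec_injective (add_left_cancel b)
      have hm : ∀ i, MeasurableSet (E i) := fun i => by
        refine (measurableSet_cyl _ _).inter ?_
        have : {w : PathSpace d | ∀ u ≤ n, w (N + 1 + u) ∈ K (u + 1)} =
            ⋂ u ∈ Set.Iic n, {w : PathSpace d | w (N + 1 + u) ∈ K (u + 1)} := by
          ext w; simp
        rw [this]
        exact MeasurableSet.biInter (Set.to_countable _) fun k _ => measurableSet_coord _ _
      rw [measure_congr h1, measure_iUnion hd hm, tsum_fintype]
      have h2 : ∀ i, pathLaw P (E i) = (if x 0 = 0 then 1 else 0) *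
          ∫⁻ ω, wE ω N x * (stepW ω (x N) i *
            stayW n (fun u => K (u + 1)) ω (x N + stepVec d i)) ∂(P.map Prod.fst) := by
        intro i
        rw [hE]
        simp only
        rw [ih (fun u => K (u + 1)) (N + 1) (y i), hyk i 0 (Nat.zero_le _), hyN]
        simp only [hy, wE_update, mul_assoc]
      simp_rw [h2]
      rw [← Finset.mul_sum, ← lintegral_finsetSum]
      · congr 2
        funext ω
        simp only [stayW, hx, if_true, Finset.mul_sum]
      · intro i _
        exact (measurable_wE N x).mul ((measurable_stepW _ _).mul (measurable_stayW _ _ _))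
    · have : cyl N x ∩ {w | ∀ u ≤ n + 1, w (N + u) ∈ K u} = ∅ := by
        refine eq_empty_of_forall_notMem fun w hw => hx ?_
        rw [← hw.1 N le_rfl]; exact hw.2 0 (Nat.zero_le _)
      rw [this]
      simp [stayW, hx]

end Walk

/-! ### Independence across fresh sites and recurrence of events -/

noncomputable section Regeneration

variable {d : ℕ} {μ : Measure (EnvDist d)} {P : Measure (RWSpace d)}

lemma pathLaw_box (hP : IsRWRE μ P) (n : ℕ) (K : ℕ → Set (Site d)) :
    pathLaw P (box n K) = ∫⁻ ω, stayW n K ω 0 ∂(P.map Prod.fst) := by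
  have h := markov_cyl hP n K 0 0
  have e : (box n K : Set (PathSpace d)) =ᵐ[pathLaw P]
      (cyl 0 0 ∩ {w | ∀ u ≤ n, w (0 + u) ∈ K u} : Set (PathSpace d)) := by
    filter_upwards [ae_start hP] with w hw
    apply propext
    change w ∈ box n K ↔ w ∈ cyl 0 0 ∩ {w : PathSpace d | ∀ u ≤ n, w (0 + u) ∈ K u}
    simp [cyl, box, hw]
  rw [measure_congr e, h]
  simp [wE, pathWeight]

/-- If the walk has not visited the translate of `H` to its current position, then the future
inside this translate is independent of the past and distributed as for a fresh walk. -/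
lemma fresh_cyl (hP : IsRWRE μ P) {H : Set (Site d)} {N : ℕ} {x : PathSpace d}
    (hx : ∀ k < N, x k - x N ∉ H) {B : Set (PathSpace d)} (hB : MeasurableSet B) :
    pathLaw P (cyl N x ∩ shiftP N ⁻¹' (B ∩ Stay H)) =
      pathLaw P (cyl N x) * pathLaw P (B ∩ Stay H) := by
  have := isProb_pathLaw hP
  have hm := measurable_shiftP (d := d) N
  have key := box_ext (ρ₁ := ((pathLaw P).restrict (cyl N x)).map (shiftP N))
    (ρ₂ := (pathLaw P (cyl N x)).toNNReal • pathLaw P) (H := H) (fun K hK n => ?_) hB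
  · rw [Measure.map_apply hm (hB.inter (measurableSet_Stay H)),
      Measure.restrict_apply (hm (hB.inter (measurableSet_Stay H))), inter_comm] at key
    rw [key, Measure.smul_apply, ENNReal.smul_def, ENNReal.coe_toNNReal (measure_ne_top _ _),
      smul_eq_mul]
  · rw [Measure.map_apply hm (measurableSet_box n K),
      Measure.restrict_apply (hm (measurableSet_box n K)), inter_comm,
      Measure.smul_apply, ENNReal.smul_def, ENNReal.coe_toNNReal (measure_ne_top _ _),
      smul_eq_mul]
    have e : cyl N x ∩ shiftP N ⁻¹' box n K =
        cyl N x ∩ {w | ∀ u ≤ n, w (N + u) ∈ (fun u => {z | z - x N ∈ K u}) u} := by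
      ext w
      refine and_congr_right fun hw => ?_
      simp only [box, shiftP, mem_preimage, mem_ofPred_eq, hw N le_rfl]
    rw [e, markov_cyl hP, pathLaw_cyl hP, pathLaw_box hP, mul_assoc]
    congr 1
    rw [lintegral_mul_of_dependsOn hP.2.1 (S := (Finset.range N).image x)
      (T := (cube (x N) n).filter fun z => ∃ u, z ∈ (fun u => {z | z - x N ∈ K u}) u) ?_
      (measurable_wE N x) (measurable_stayW _ _ _) (wE_dependsOn N x) (stayW_dependsOn _ _ _),
      lintegral_stayW_shift hP.2.1]
    · simp
    · refine Finset.disjoint_left.2 fun z hz hz' => ?_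
      obtain ⟨k, hk, rfl⟩ := Finset.mem_image.1 hz
      obtain ⟨-, u, hu⟩ := Finset.mem_filter.1 hz'
      exact hx k (Finset.mem_range.1 hk) (hK u hu)

lemma fresh_det (hP : IsRWRE μ P) {H : Set (Site d)} {N : ℕ} {A : Set (PathSpace d)}
    (hA : Det N A) (hx : ∀ x ∈ A, ∀ k < N, x k - x N ∉ H) {B : Set (PathSpace d)}
    (hB : MeasurableSet B) :
    pathLaw P (A ∩ shiftP N ⁻¹' (B ∩ Stay H)) = pathLaw P A * pathLaw P (B ∩ Stay H) := by
  have hm := measurable_shiftP (d := d) N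
  have hS := hm (hB.inter (measurableSet_Stay H))
  have := hA.measure_eq (ρ₁ := (pathLaw P).restrict (shiftP N ⁻¹' (B ∩ Stay H)))
    (ρ₂ := pathLaw P (B ∩ Stay H) • pathLaw P) fun x hxA => by
      rw [Measure.restrict_apply (measurableSet_cyl _ _), fresh_cyl hP (hx x hxA) hB,
        Measure.smul_apply, smul_eq_mul, mul_comm]
  rw [Measure.restrict_apply hA.measurableSet, Measure.smul_apply, smul_eq_mul, mul_comm] at this
  exact this

/-- If the walk cannot stay in `H` forever, then it never does so from any later time on. -/
lemma ae_shift_notMem_Stay (hP : IsRWRE μ P) {H : Set (Site d)} (h0 : pathLaw P (Stay H) = 0) :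
    ∀ᵐ w ∂pathLaw P, ∀ N, shiftP N w ∉ Stay H := by
  have := isProb_pathLaw hP
  have hν := hP.2.1.2.1
  rw [ae_all_iff]
  intro N
  have hm := measurable_shiftP (d := d) N
  have hcyl : ∀ x, pathLaw P (cyl N x ∩ shiftP N ⁻¹' Stay H) = 0 := by
    intro x
    refine le_antisymm ?_ zero_le
    rw [← h0]
    refine ge_of_tendsto' (tendsto_measure_box (pathLaw P) fun _ => H) fun n => ?_
    have e : cyl N x ∩ shiftP N ⁻¹' Stay H ⊆
        cyl N x ∩ {w | ∀ u ≤ n, w (N + u) ∈ (fun _ : ℕ => {z | z - x N ∈ H}) u} := by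
      refine fun w hw => ⟨hw.1, fun u _ => ?_⟩
      have := hw.2 u
      simp only [shiftP, hw.1 N le_rfl] at this
      exact this
    refine (measure_mono e).trans ?_
    rw [markov_cyl hP, pathLaw_box hP]
    calc (if x 0 = 0 then 1 else 0) * ∫⁻ ω, wE ω N x *
          stayW n (fun _ => {z | z - x N ∈ H}) ω (x N) ∂(P.map Prod.fst)
        ≤ 1 * ∫⁻ ω, 1 * stayW n (fun _ => {z | z - x N ∈ H}) ω (x N) ∂(P.map Prod.fst) := by
          refine mul_le_mul' (by split_ifs <;> simp) (lintegral_mono fun ω => ?_)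
          exact mul_le_mul' (wE_le_one _ _ _) le_rfl
      _ = _ := by
          simp only [one_mul]
          rw [lintegral_stayW_shift hP.2.1]
          simp
  have hU : Det (d := d) N univ := fun _ _ _ _ => trivial
  have := hU.measure_le (ρ₁ := (pathLaw P).restrict (shiftP N ⁻¹' Stay H)) (ρ₂ := 0)
    fun x _ => by
      rw [Measure.restrict_apply (measurableSet_cyl _ _), hcyl]; simp
  rw [Measure.restrict_apply MeasurableSet.univ, univ_inter] at this
  rw [ae_iff]
  simp only [not_not]
  exact le_antisymm this zero_le

lemma Det.mono {m n : ℕ} (h : m ≤ n) {A : Set (PathSpace d)} (hA : Det m A) : Det n A :=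
  fun w w' hw => hA w w' fun k hk => hw k (hk.trans h)

lemma Det.compl {n : ℕ} {A : Set (PathSpace d)} (hA : Det n A) : Det n Aᶜ :=
  fun w w' h hw hw' => hw (hA w' w (fun k hk => (h k hk).symm) hw')

lemma Det.union {n : ℕ} {A B : Set (PathSpace d)} (hA : Det n A) (hB : Det n B) :
    Det n (A ∪ B) := fun w w' h hw => hw.imp (hA w w' h) (hB w w' h)

/-- Events determined by finitely many steps approximate every event. -/
lemma exists_det_symmDiff_lt (ρ : Measure (PathSpace d)) [IsFiniteMeasure ρ]
    {F : Set (PathSpace d)} (hF : MeasurableSet F) {ε : ℝ≥0∞} (hε : 0 < ε) :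
    ∃ n C, Det n C ∧ ρ (symmDiff C F) < ε := by
  have hC : IsSetRing {C : Set (PathSpace d) | ∃ n, Det n C} := by
    constructor
    · exact ⟨0, fun _ _ _ h => h⟩
    · rintro s t ⟨m, hm⟩ ⟨n, hn⟩
      exact ⟨max m n, (hm.mono (le_max_left _ _)).union (hn.mono (le_max_right _ _))⟩
    · rintro s t ⟨m, hm⟩ ⟨n, hn⟩
      exact ⟨max m n, (hm.mono (le_max_left _ _)).inter (hn.compl.mono (le_max_right _ _))⟩
  have hg : (inferInstance : MeasurableSpace (PathSpace d)) =
      MeasurableSpace.generateFrom {C : Set (PathSpace d) | ∃ n, Det n C} := by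
    apply le_antisymm
    · refine iSup_le fun k => ?_
      rintro _ ⟨s, -, rfl⟩
      refine MeasurableSpace.measurableSet_generateFrom ⟨k, fun w w' h hw => ?_⟩
      rw [mem_preimage, ← h k le_rfl]; exact hw
    · refine MeasurableSpace.generateFrom_le ?_
      rintro C ⟨n, hn⟩
      exact hn.measurableSet
  obtain ⟨C, ⟨n, hn⟩, h⟩ := exists_measure_symmDiff_lt_of_generateFrom_isSetRing (μ := ρ) hC
    ⟨{univ}, countable_singleton _, by
      rw [singleton_subset_iff]; exact ⟨0, fun _ _ _ _ => trivial⟩, by simp⟩ hg hF hε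
  exact ⟨n, C, hn, h⟩

/-- A form of Lévy's zero-one law: an event which, at infinitely many times, has conditional
probability at most `c < 1` given the past is null. -/
lemma null_of_recurrent (ρ : Measure (PathSpace d)) [IsProbabilityMeasure ρ]
    {F : Set (PathSpace d)} (hF : MeasurableSet F) {c : ℝ≥0∞} (hc : c < 1)
    (A : ℕ → Set (PathSpace d)) (hA : ∀ N, Det N (A N))
    (hcond : ∀ N C, Det N C → C ⊆ A N → ρ (C ∩ F) ≤ c * ρ C)
    (hinf : ∀ w ∈ F, ∀ m, ∃ N ≥ m, w ∈ A N) : ρ F = 0 := by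
  have step : ∀ m C, Det m C → ρ (F ∩ C) ≤ c * ρ C := by
    intro m C hC
    set D : ℕ → Set (PathSpace d) := fun N =>
      C ∩ {w | w ∈ A (m + N) ∧ ∀ k < N, w ∉ A (m + k)} with hD
    have hDet : ∀ N, Det (m + N) (D N) := fun N =>
      (hC.mono (by omega)).inter fun w w' h hw =>
        ⟨hA _ w w' h hw.1, fun k hk hw' => hw.2 k hk
          (hA _ w' w (fun j hj => (h j (by omega)).symm) hw')⟩
    have hdisj : Pairwise (Function.onFun Disjoint D) := by
      intro i j hij
      refine Set.disjoint_left.2 fun w hi hj => ?_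
      rcases lt_or_gt_of_ne hij with h | h
      · exact hj.2.2 i h hi.2.1
      · exact hi.2.2 j h hj.2.1
    have hsub : F ∩ C ⊆ ⋃ N, D N ∩ F := by
      rintro w ⟨hw, hwC⟩
      have hex : ∃ N, w ∈ A (m + N) := by
        obtain ⟨N, hN, h⟩ := hinf w hw m
        exact ⟨N - m, by rwa [show m + (N - m) = N by omega]⟩
      exact mem_iUnion.2 ⟨Nat.find hex,
        ⟨hwC, Nat.find_spec hex, fun k hk => Nat.find_min hex hk⟩, hw⟩
    calc ρ (F ∩ C) ≤ ∑' N, ρ (D N ∩ F) := (measure_mono hsub).trans (measure_iUnion_le _)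
      _ ≤ ∑' N, c * ρ (D N) := ENNReal.tsum_le_tsum fun N =>
          hcond _ _ (hDet N) fun w hw => hw.2.1
      _ = c * ρ (⋃ N, D N) := by
          rw [ENNReal.tsum_mul_left, measure_iUnion hdisj fun N => (hDet N).measurableSet]
      _ ≤ c * ρ C := mul_le_mul' le_rfl (measure_mono (iUnion_subset fun N w hw => hw.1))
  by_contra h0
  have hfin : ρ F ≠ ∞ := measure_ne_top _ _
  -- the approximation error is chosen so small that `c * (ρ F + ε) + ε < ρ F`
  set ε : ℝ≥0∞ := (1 - c) * ρ F / 2 with hε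
  have hc1 : 1 - c ≠ 0 := (tsub_pos_of_lt hc).ne'
  have hεpos : 0 < ε := by
    rw [hε]
    exact ENNReal.div_pos (mul_ne_zero hc1 h0) (by simp)
  obtain ⟨n, C, hC, hlt⟩ := exists_det_symmDiff_lt ρ hF hεpos
  have e1 : ρ C ≤ ρ F + ρ (symmDiff C F) :=
    (measure_mono fun w hw => by
      by_cases h : w ∈ F
      · exact Or.inl h
      · exact Or.inr (Or.inl ⟨hw, h⟩)).trans (measure_union_le F (symmDiff C F))
  have e2 : ρ F ≤ ρ (F ∩ C) + ρ (symmDiff C F) :=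
    (measure_mono fun w hw => by
      by_cases h : w ∈ C
      · exact Or.inl ⟨hw, h⟩
      · exact Or.inr (Or.inr ⟨hw, h⟩)).trans (measure_union_le _ _)
  have e3 := step n C hC
  have hct : c ≠ ∞ := (hc.trans ENNReal.one_lt_top).ne
  have hS : ρ (symmDiff C F) ≠ ∞ := measure_ne_top _ _
  have hCt : ρ C ≠ ∞ := measure_ne_top _ _
  have hFCt : ρ (F ∩ C) ≠ ∞ := measure_ne_top _ _
  lift c to NNReal using hct
  have r1 := ENNReal.toReal_mono (by finiteness) e1
  have r2 := ENNReal.toReal_mono (by finiteness) e2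
  have r3 := ENNReal.toReal_mono (by finiteness) e3
  have r4 := (ENNReal.toReal_lt_toReal hS (by rw [hε]; finiteness)).2 hlt
  rw [ENNReal.toReal_add hfin hS] at r1
  rw [ENNReal.toReal_add hFCt hS] at r2
  rw [ENNReal.toReal_mul] at r3
  rw [hε, ENNReal.toReal_div, ENNReal.toReal_mul, ENNReal.toReal_sub_of_le hc.le (by simp)] at r4
  have hc' : (c : ℝ) < 1 := by exact_mod_cast hc
  have hF0 : 0 < (ρ F).toReal := ENNReal.toReal_pos h0 hfin
  simp only [ENNReal.coe_toReal, ENNReal.toReal_one, ENNReal.toReal_ofNat] at *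
  have hc0 : (0 : ℝ) ≤ c := c.2
  nlinarith [mul_le_mul_of_nonneg_left r1 hc0, mul_nonneg (sub_nonneg.2 hc'.le)
    (ENNReal.toReal_nonneg (a := ρ (symmDiff C F)))]

/-- At time `N` the walk is strictly above all its previous levels. -/
def Rec (Z : Site d →+ ℤ) (N : ℕ) : Set (PathSpace d) := {w | ∀ k < N, Z (w k) < Z (w N)}

lemma det_Rec (Z : Site d →+ ℤ) (N : ℕ) : Det N (Rec Z N) := fun w w' h hw k hk => by
  rw [← h k hk.le, ← h N le_rfl]; exact hw k hk

lemma exists_Rec {Z : Site d →+ ℤ} {w : PathSpace d} (hw : ∀ M : ℤ, ∃ n, M ≤ Z (w n)) (m : ℕ) :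
    ∃ N ≥ m, w ∈ Rec Z N := by
  obtain ⟨M, hM⟩ : ∃ M, ∀ k < m, Z (w k) < M := by
    induction m with
    | zero => exact ⟨0, by simp⟩
    | succ m ih =>
      obtain ⟨M, hM⟩ := ih
      refine ⟨max M (Z (w m) + 1), fun k hk => ?_⟩
      rcases Nat.lt_succ_iff_lt_or_eq.1 hk with h | rfl
      · exact (hM k h).trans_le (le_max_left _ _)
      · exact (Int.lt_succ _).trans_le (le_max_right _ _)
  refine ⟨Nat.find (hw M), ?_, fun k hk => ?_⟩
  · by_contra h
    exact absurd (Nat.find_spec (hw M)) (not_le.2 (hM _ (not_le.1 h)))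
  · exact (not_le.1 (Nat.find_min (hw M) hk)).trans_le (Nat.find_spec (hw M))

/-- If the walk can stay forever in `H ⊆ {Z ≥ 0}`, then on the event that `Z` is unbounded above
there are arbitrarily late record times after which the walk stays in the translate of `H`. -/
lemma ae_exists_regen (hP : IsRWRE μ P) (Z : Site d →+ ℤ) {H : Set (Site d)}
    (hH : H ⊆ {z | 0 ≤ Z z}) (hpos : pathLaw P (Stay H) ≠ 0) :
    ∀ᵐ w ∂pathLaw P, (∀ M : ℤ, ∃ n, M ≤ Z (w n)) →
      ∀ K, ∃ N ≥ K, w ∈ Rec Z N ∧ shiftP N w ∈ Stay H := by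
  have := isProb_pathLaw hP
  have hm : ∀ K, pathLaw P {w | (∀ M : ℤ, ∃ n, M ≤ Z (w n)) ∧
      ∀ N ≥ K, w ∈ Rec Z N → shiftP N w ∉ Stay H} = 0 := by
    intro K
    refine null_of_recurrent (pathLaw P) ?_ (c := 1 - pathLaw P (Stay H))
      (ENNReal.sub_lt_self (by simp) (by simp) hpos)
      (fun N => {w | K ≤ N ∧ w ∈ Rec Z N}) ?_ ?_ ?_
    · refine MeasurableSet.inter ?_ ?_
      · have : {w : PathSpace d | ∀ M : ℤ, ∃ n, M ≤ Z (w n)} =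
            ⋂ M : ℤ, ⋃ n, {w : PathSpace d | w n ∈ {z | M ≤ Z z}} := by
          ext w; simp
        change MeasurableSet {w : PathSpace d | ∀ M : ℤ, ∃ n, M ≤ Z (w n)}
        rw [this]
        exact MeasurableSet.iInter fun M => MeasurableSet.iUnion fun n => measurableSet_coord _ _
      · have : {w : PathSpace d | ∀ N ≥ K, w ∈ Rec Z N → shiftP N w ∉ Stay H} =
            ⋂ N ∈ Set.Ici K, ((Rec Z N)ᶜ ∪ (shiftP N ⁻¹' Stay H)ᶜ) := by
          ext w; simp [imp_iff_not_or]
        change MeasurableSet {w : PathSpace d | ∀ N ≥ K, w ∈ Rec Z N → shiftP N w ∉ Stay H}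
        rw [this]
        exact MeasurableSet.biInter (Set.to_countable _) fun N _ =>
          (det_Rec Z N).measurableSet.compl.union
            ((measurable_shiftP N) (measurableSet_Stay H)).compl
    · exact fun N w w' h hw => ⟨hw.1, det_Rec Z N w w' h hw.2⟩
    · intro N C hC hCA
      have h1 := fresh_det hP hC (H := H) (fun x hx k hk hmem => by
        have h2 := hH hmem
        have h3 := (hCA hx).2 k hk
        simp only [mem_ofPred_eq, map_sub] at h2
        omega) (B := univ) MeasurableSet.univ
      rw [univ_inter] at h1
      have h2 : C ∩ {w | (∀ M : ℤ, ∃ n, M ≤ Z (w n)) ∧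
          ∀ N ≥ K, w ∈ Rec Z N → shiftP N w ∉ Stay H} ⊆ C \ (C ∩ shiftP N ⁻¹' Stay H) :=
        fun w hw => ⟨hw.1, fun h => hw.2.2 N (hCA hw.1).1 (hCA hw.1).2 h.2⟩
      refine (measure_mono h2).trans ?_
      rw [measure_sdiff inter_subset_left ((hC.measurableSet.inter
        ((measurable_shiftP N) (measurableSet_Stay H))).nullMeasurableSet) (measure_ne_top _ _), h1,
        ENNReal.sub_mul (fun _ _ => measure_ne_top _ _), one_mul, mul_comm]
    · intro w hw m
      obtain ⟨N, hN, h⟩ := exists_Rec hw.1 (max m K)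
      exact ⟨N, (le_max_left _ _).trans hN, (le_max_right _ _).trans hN, h⟩
  have : ∀ᵐ w ∂pathLaw P, ∀ K, ¬ ((∀ M : ℤ, ∃ n, M ≤ Z (w n)) ∧
      ∀ N ≥ K, w ∈ Rec Z N → shiftP N w ∉ Stay H) := by
    rw [ae_all_iff]
    intro K
    rw [ae_iff]
    simpa using hm K
  filter_upwards [this] with w hw hsup K
  by_contra hcon
  push Not at hcon
  exact hw K ⟨hsup, fun N hN hr => hcon N hN hr⟩

end Regeneration

/-! ### The four possible behaviours of a coordinate -/

noncomputable section Dichotomy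

variable {d : ℕ} {μ : Measure (EnvDist d)} {P : Measure (RWSpace d)}

/-- The half space `{Z ≥ 0}`. -/
def half (Z : Site d →+ ℤ) : Set (Site d) := {z | 0 ≤ Z z}

lemma exists_argmin {Z : Site d →+ ℤ} {w : PathSpace d} (h : ∃ M, ∀ n, M ≤ Z (w n)) :
    ∃ N, ∀ n, Z (w N) ≤ Z (w n) := by
  obtain ⟨M, hM⟩ := h
  obtain ⟨m, ⟨N, rfl⟩, hmin⟩ := Int.exists_least_of_bdd (P := fun z => ∃ n, Z (w n) = z)
    ⟨M, by rintro _ ⟨n, rfl⟩; exact hM n⟩ ⟨_, 0, rfl⟩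
  exact ⟨N, fun n => hmin _ ⟨n, rfl⟩⟩

/-- If the walk has zero probability to stay in `{Z ≥ 0}`, then `Z` is unbounded below. -/
lemma ae_unbdd_below (hP : IsRWRE μ P) {Z : Site d →+ ℤ} (h0 : pathLaw P (Stay (half Z)) = 0) :
    ∀ᵐ w ∂pathLaw P, ∀ M : ℤ, ∃ n, Z (w n) < M := by
  filter_upwards [ae_shift_notMem_Stay hP h0] with w hw M
  by_contra hcon
  push Not at hcon
  obtain ⟨N, hN⟩ := exists_argmin ⟨M, hcon⟩
  refine hw N fun u => ?_
  have := hN (N + u)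
  simp only [half, shiftP, mem_ofPred_eq, map_sub]
  omega

lemma ae_tendsto_of_unbdd (hP : IsRWRE μ P) {Z : Site d →+ ℤ}
    (hpos : pathLaw P (Stay (half Z)) ≠ 0) :
    ∀ᵐ w ∂pathLaw P, (∀ M : ℤ, ∃ n, M ≤ Z (w n)) → Tendsto (fun n => Z (w n)) atTop atTop := by
  filter_upwards [ae_exists_regen hP Z (H := half Z) subset_rfl hpos] with w hw hsup
  refine tendsto_atTop.2 fun M => ?_
  obtain ⟨n, hn⟩ := hsup M
  obtain ⟨N, hN, hr, hs⟩ := hw hsup (n + 1)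
  filter_upwards [eventually_ge_atTop N] with k hk
  have h1 := hr n (by omega)
  have h2 := hs (k - N)
  simp only [half, shiftP, mem_ofPred_eq, map_sub, show N + (k - N) = k by omega] at h2
  omega

lemma ae_bddAbove_of_bounded (hP : IsRWRE μ P) {Z : Site d →+ ℤ}
    (hb : ¬ ∀ᵐ w ∂pathLaw P, ¬ ∃ C : ℤ, ∀ n, |Z (w n)| ≤ C) :
    ∀ᵐ w ∂pathLaw P, ∃ C : ℤ, ∀ n, Z (w n) ≤ C := by
  obtain ⟨L, hL⟩ : ∃ L : ℕ, pathLaw P (Stay {z | 0 ≤ Z z ∧ Z z ≤ L}) ≠ 0 := by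
    by_contra hcon
    push Not at hcon
    refine hb ?_
    have := fun L => ae_shift_notMem_Stay hP (hcon L)
    filter_upwards [ae_all_iff.2 this] with w hw
    rintro ⟨C, hC⟩
    obtain ⟨N, hN⟩ := exists_argmin (Z := Z) (w := w)
      ⟨-C, fun n => by have := abs_le.1 (hC n); omega⟩
    refine hw (2 * C).toNat N fun u => ?_
    have h1 := hN (N + u)
    have h2 := abs_le.1 (hC (N + u))
    have h3 := abs_le.1 (hC N)
    simp only [shiftP, mem_ofPred_eq, map_sub]
    omega
  filter_upwards [ae_exists_regen hP Z (fun z hz => hz.1) hL] with w hw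
  by_contra hcon
  push Not at hcon
  have hsup : ∀ M : ℤ, ∃ n, M ≤ Z (w n) := fun M => (hcon M).imp fun n hn => hn.le
  obtain ⟨N, -, hr, hs⟩ := hw hsup 0
  obtain ⟨n, hn⟩ := hcon (Z (w N) + L)
  have hnN : N ≤ n := by
    by_contra h
    have := hr n (not_le.1 h)
    omega
  have h2 := (hs (n - N)).2
  simp only [shiftP, map_sub, show N + (n - N) = n by omega] at h2
  omega

/-- Either `Z` is a.s. bounded, or it tends to `+∞` with positive probability, or it tends to `-∞`
almost surely, or the walk cannot stay forever on one side of its starting level. -/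
lemma behaviour (hP : IsRWRE μ P) (Z : Site d →+ ℤ) :
    (∀ᵐ w ∂pathLaw P, ∃ C : ℤ, ∀ n, |Z (w n)| ≤ C) ∨
    (¬ ∀ᵐ w ∂pathLaw P, ¬ Tendsto (fun n => Z (w n)) atTop atTop) ∨
    (∀ᵐ w ∂pathLaw P, Tendsto (fun n => (-Z) (w n)) atTop atTop) ∨
    (pathLaw P (Stay (half Z)) = 0 ∧ pathLaw P (Stay (half (-Z))) = 0) := by
  by_cases hb : ∀ᵐ w ∂pathLaw P, ¬ ∃ C : ℤ, ∀ n, |Z (w n)| ≤ C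
  · right
    by_cases hp : pathLaw P (Stay (half Z)) = 0
    · right
      by_cases hm : pathLaw P (Stay (half (-Z))) = 0
      · exact Or.inr ⟨hp, hm⟩
      · left
        filter_upwards [ae_tendsto_of_unbdd hP hm, ae_unbdd_below hP hp] with w h1 h2
        refine h1 fun M => ?_
        obtain ⟨n, hn⟩ := h2 (-M)
        exact ⟨n, by simp only [AddMonoidHom.neg_apply]; omega⟩
    · left
      intro hcon
      refine hp ?_
      have : ∀ᵐ w ∂pathLaw P, w ∉ Stay (half Z) := by
        filter_upwards [hcon, hb, ae_tendsto_of_unbdd hP hp] with w h1 h2 h3 h4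
        refine h1 (h3 ?_)
        by_contra h5
        push Not at h5
        obtain ⟨M, hM⟩ := h5
        refine h2 ⟨M, fun n => abs_le.2 ?_⟩
        have a := hM n
        have b : 0 ≤ Z (w n) := h4 n
        omega
      simpa [ae_iff] using this
  · left
    have hb' : ¬ ∀ᵐ w ∂pathLaw P, ¬ ∃ C : ℤ, ∀ n, |(-Z) (w n)| ≤ C := by simpa using hb
    filter_upwards [ae_bddAbove_of_bounded hP hb, ae_bddAbove_of_bounded hP hb']
      with w ⟨C, hC⟩ ⟨C', hC'⟩
    refine ⟨max C C', fun n => abs_le.2 ?_⟩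
    have a := hC n
    have b := hC' n
    simp only [AddMonoidHom.neg_apply] at b
    omega

end Dichotomy

/-! ### Regeneration times -/

noncomputable section RegTimes

variable {d : ℕ} {μ : Measure (EnvDist d)} {P : Measure (RWSpace d)} {Z : Site d →+ ℤ}

/-- The regeneration times of `w` in direction `Z`: strict record times of `Z` after which the
path never goes below its current level. -/
def RegS (Z : Site d →+ ℤ) (w : PathSpace d) : Set ℕ :=
  {N | w ∈ Rec Z N ∧ shiftP N w ∈ Stay (half Z)}

lemma mem_RegS {w : PathSpace d} {N : ℕ} :
    N ∈ RegS Z w ↔ (∀ k < N, Z (w k) < Z (w N)) ∧ ∀ k, N ≤ k → Z (w N) ≤ Z (w k) := by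
  refine and_congr_right fun _ => ⟨fun h k hk => ?_, fun h u => ?_⟩
  · have := h (k - N)
    simp only [half, shiftP, mem_ofPred_eq, map_sub, show N + (k - N) = k by omega] at this
    omega
  · have := h (N + u) (by omega)
    simp only [half, shiftP, mem_ofPred_eq, map_sub]
    omega

/-- `N` is the `k`-th regeneration time, counting from `0`. -/
def IsTau (Z : Site d →+ ℤ) (k : ℕ) (w : PathSpace d) (N : ℕ) : Prop :=
  N ∈ RegS Z w ∧ Nat.count (· ∈ RegS Z w) N = k

/-- The `k`-th regeneration time, and `0` if there is none. -/
def tau (Z : Site d →+ ℤ) (k : ℕ) (w : PathSpace d) : ℕ := sInf {N | IsTau Z k w N}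

lemma IsTau.unique {k : ℕ} {w : PathSpace d} {M N : ℕ} (h : IsTau Z k w M) (h' : IsTau Z k w N) :
    M = N :=
  Nat.count_injective h.1 h'.1 (h.2.trans h'.2.symm)

lemma IsTau.le {j k : ℕ} (hjk : j ≤ k) {w : PathSpace d} {M N : ℕ} (h : IsTau Z j w M)
    (h' : IsTau Z k w N) : M ≤ N := by
  by_contra hlt
  have h1 : Nat.count (· ∈ RegS Z w) (N + 1) ≤ Nat.count (· ∈ RegS Z w) M :=
    Nat.count_monotone _ (not_le.1 hlt)
  rw [Nat.count_succ, if_pos h'.1, h'.2, h.2] at h1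
  omega

lemma IsTau.tau_eq {k : ℕ} {w : PathSpace d} {N : ℕ} (h : IsTau Z k w N) : tau Z k w = N := by
  have : {N | IsTau Z k w N} = {N} := by
    ext M; exact ⟨fun hM => IsTau.unique hM h, fun hM => by rw [mem_singleton_iff.1 hM]; exact h⟩
  rw [tau, this, csInf_singleton]

lemma isTau_tau {w : PathSpace d} (hw : (RegS Z w).Infinite) (k : ℕ) :
    IsTau Z k w (tau Z k w) := by
  have h : IsTau Z k w (Nat.nth (· ∈ RegS Z w) k) :=
    ⟨Nat.nth_mem_of_infinite hw k, Nat.count_nth_of_infinite (p := (· ∈ RegS Z w)) hw k⟩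
  rw [h.tau_eq]; exact h

lemma tau_strictMono {w : PathSpace d} (hw : (RegS Z w).Infinite) :
    StrictMono fun k => tau Z k w := by
  intro j k hjk
  refine lt_of_le_of_ne ((isTau_tau hw j).le hjk.le (isTau_tau hw k)) fun h => ?_
  have h1 := (isTau_tau hw j).2
  simp only at h
  rw [h, (isTau_tau hw k).2] at h1
  omega

/-- Seen from a regeneration time, the later regeneration times are those of the shifted path. -/
lemma mem_RegS_shiftP {w : PathSpace d} {N : ℕ} (hN : N ∈ RegS Z w) (n : ℕ) :
    n ∈ RegS Z (shiftP N w) ↔ N + n ∈ RegS Z w := by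
  rw [mem_RegS] at hN
  simp only [mem_RegS, shiftP, map_sub]
  constructor
  · rintro ⟨h1, h2⟩
    refine ⟨fun k hk => ?_, fun k hk => ?_⟩
    · rcases lt_or_ge k N with h | h
      · have a := hN.1 k h
        have b := hN.2 (N + n) (by omega)
        omega
      · have a := h1 (k - N) (by omega)
        rw [show N + (k - N) = k by omega] at a
        omega
    · have a := h2 (k - N) (by omega)
      rw [show N + (k - N) = k by omega] at a
      omega
  · rintro ⟨h1, h2⟩
    refine ⟨fun k hk => ?_, fun k hk => ?_⟩
    · have := h1 (N + k) (by omega)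
      omega
    · have := h2 (N + k) (by omega)
      omega

lemma isTau_shiftP {w : PathSpace d} {k j N n : ℕ} (hN : IsTau Z k w N) :
    IsTau Z j (shiftP N w) n ↔ IsTau Z (k + j) w (N + n) := by
  have e : Nat.count (· ∈ RegS Z (shiftP N w)) n = Nat.count (fun n => N + n ∈ RegS Z w) n := by
    congr 1
    funext n
    exact propext (mem_RegS_shiftP hN.1 n)
  rw [IsTau, IsTau, mem_RegS_shiftP hN.1, e, Nat.count_add, hN.2, add_right_inj]

lemma infinite_RegS_shiftP {w : PathSpace d} (hw : (RegS Z w).Infinite) {N : ℕ}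
    (hN : N ∈ RegS Z w) : (RegS Z (shiftP N w)).Infinite := by
  refine Set.infinite_of_forall_exists_gt fun a => ?_
  obtain ⟨m, hm, hlt⟩ := hw.exists_gt (N + a)
  refine ⟨m - N, (mem_RegS_shiftP hN _).2 ?_, by omega⟩
  rwa [show N + (m - N) = m by omega]

lemma tau_add {w : PathSpace d} (hw : (RegS Z w).Infinite) (k j : ℕ) :
    tau Z (k + j) w = tau Z k w + tau Z j (shiftP (tau Z k w) w) :=
  IsTau.tau_eq <| (isTau_shiftP (isTau_tau hw k)).1
    (isTau_tau (infinite_RegS_shiftP hw (isTau_tau hw k).1) j)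

/-- The path stopped at time `N`. -/
def stopP (N : ℕ) (w : PathSpace d) : PathSpace d := fun k => w (min k N)

lemma det_stopP (N : ℕ) (F : Set (PathSpace d)) : Det N {w | stopP N w ∈ F} := by
  intro w w' h hw
  have : stopP N w = stopP N w' := funext fun k => h _ (min_le_right _ _)
  rwa [mem_ofPred_eq, ← this]

/-- Given that `N` is a regeneration time, the regeneration times before `N` can be read off from
the path up to time `N`. -/
lemma mem_RegS_stopP {w : PathSpace d} {N : ℕ} (hN : N ∈ RegS Z w) {M : ℕ} (hM : M ≤ N) :
    M ∈ RegS Z (stopP N w) ↔ M ∈ RegS Z w := by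
  rw [mem_RegS] at hN
  simp only [mem_RegS, stopP, min_eq_left hM]
  refine and_congr ?_ ?_
  · refine forall₂_congr fun k hk => ?_
    rw [min_eq_left (by omega)]
  · constructor
    · intro h k hk
      rcases le_total k N with h1 | h1
      · simpa [h1] using h k hk
      · have a := h N hM
        rw [min_self] at a
        exact a.trans (hN.2 k h1)
    · intro h k hk
      exact h _ (le_min hk hM)

lemma isTau_stopP {w : PathSpace d} {N : ℕ} (hN : N ∈ RegS Z w) {M : ℕ} (hM : M ≤ N) (j : ℕ) :
    IsTau Z j (stopP N w) M ↔ IsTau Z j w M := by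
  have e : Nat.count (· ∈ RegS Z (stopP N w)) M = Nat.count (· ∈ RegS Z w) M := by
    rw [Nat.count_eq_card_filter_range, Nat.count_eq_card_filter_range]
    congr 1
    refine Finset.filter_congr fun k hk => ?_
    exact mem_RegS_stopP hN (by have := Finset.mem_range.1 hk; omega)
  rw [IsTau, IsTau, mem_RegS_stopP hN hM, e]

lemma measurableSet_mem_RegS (N : ℕ) : MeasurableSet {w : PathSpace d | N ∈ RegS Z w} :=
  (det_Rec Z N).measurableSet.inter (measurable_shiftP N (measurableSet_Stay _))

lemma measurableSet_isTau (k N : ℕ) : MeasurableSet {w : PathSpace d | IsTau Z k w N} := by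
  refine (measurableSet_mem_RegS N).inter ?_
  have hm : Measurable fun w : PathSpace d => Nat.count (· ∈ RegS Z w) N := by
    induction N with
    | zero => simp only [Nat.count_zero]; exact measurable_const
    | succ N ih =>
      simp only [Nat.count_succ]
      exact ih.add (Measurable.ite (measurableSet_mem_RegS N) measurable_const measurable_const)
  exact hm (measurableSet_singleton k)

lemma measurable_tau (k : ℕ) : Measurable fun w : PathSpace d => tau Z k w := by
  refine measurable_to_countable' fun N => ?_
  have : (fun w : PathSpace d => tau Z k w) ⁻¹' {N} =
      {w | IsTau Z k w N} ∪ ({w | ∀ M, ¬ IsTau Z k w M} ∩ {_w | N = 0}) := by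
    ext w
    simp only [mem_preimage, mem_singleton_iff, mem_union, mem_inter_iff, mem_ofPred_eq]
    by_cases h : ∃ M, IsTau Z k w M
    · obtain ⟨M, hM⟩ := h
      rw [hM.tau_eq]
      constructor
      · rintro rfl; exact Or.inl hM
      · rintro (h | h)
        · exact hM.unique h
        · exact absurd hM (h.1 M)
    · push Not at h
      have h0 : {N | IsTau Z k w N} = ∅ := by ext M; simp [h M]
      rw [tau, h0, Nat.sInf_empty]
      simp [h, eq_comm]
  rw [this]
  refine (measurableSet_isTau k N).union (MeasurableSet.inter ?_ (MeasurableSet.const _))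
  have : {w : PathSpace d | ∀ M, ¬ IsTau Z k w M} = ⋂ M, {w | IsTau Z k w M}ᶜ := by
    ext w; simp
  rw [this]
  exact MeasurableSet.iInter fun M => (measurableSet_isTau k M).compl

lemma measurable_eval {T : PathSpace d → ℕ} (hT : Measurable T) :
    Measurable fun w : PathSpace d => w (T w) := by
  have : Measurable fun p : PathSpace d × ℕ => p.1 p.2 :=
    measurable_from_prod_countable_left fun n => measurable_coord n
  exact this.comp (measurable_id.prodMk hT)

lemma measurable_shift_tau (k : ℕ) :
    Measurable fun w : PathSpace d => shiftP (tau Z k w) w :=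
  measurable_pi_lambda _ fun n =>
    (measurable_eval ((measurable_tau k).add_const n)).sub (measurable_eval (measurable_tau k))

/-- **Renewal property** at the `k`-th regeneration time: the path seen from there is independent
of the past `F`, and distributed as the walk conditioned to stay in the half space. The weight
`S` depends only on `F`. -/
lemma renewal (hP : IsRWRE μ P) (hinf : ∀ᵐ w ∂pathLaw P, (RegS Z w).Infinite) (k : ℕ)
    {F : Set (PathSpace d)}
    (hF : ∀ w N, IsTau Z k w N → (w ∈ F ↔ stopP N w ∈ F)) :
    ∃ S : ℝ≥0∞, ∀ B, MeasurableSet B →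
      pathLaw P (F ∩ {w | shiftP (tau Z k w) w ∈ B}) = S * pathLaw P (B ∩ Stay (half Z)) := by
  set A : ℕ → Set (PathSpace d) := fun N =>
    {w | stopP N w ∈ F ∩ {w | IsTau Z k w N}} ∩ Rec Z N with hA
  have hAdet : ∀ N, Det N (A N) := fun N => (det_stopP N _).inter (det_Rec Z N)
  have hAtau : ∀ N w, w ∈ A N → shiftP N w ∈ Stay (half Z) → IsTau Z k w N := by
    intro N w hw hs
    have hreg : N ∈ RegS Z w := ⟨hw.2, hs⟩
    exact (isTau_stopP hreg le_rfl k).1 hw.1.2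
  refine ⟨∑' N, pathLaw P (A N), fun B hB => ?_⟩
  have e : (F ∩ {w | shiftP (tau Z k w) w ∈ B} : Set (PathSpace d)) =ᵐ[pathLaw P]
      ⋃ N, A N ∩ shiftP N ⁻¹' (B ∩ Stay (half Z)) := by
    filter_upwards [hinf] with w hw
    apply propext
    change w ∈ F ∩ {w | shiftP (tau Z k w) w ∈ B} ↔
      w ∈ ⋃ N, A N ∩ shiftP N ⁻¹' (B ∩ Stay (half Z))
    rw [mem_iUnion]
    constructor
    · rintro ⟨h1, h2⟩
      have ht := isTau_tau hw k
      exact ⟨tau Z k w, ⟨⟨(hF _ _ ht).1 h1, (isTau_stopP ht.1 le_rfl k).2 ht⟩, ht.1.1⟩, h2, ht.1.2⟩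
    · rintro ⟨N, h1, h2, h3⟩
      have ht := hAtau N w h1 h3
      refine ⟨(hF _ _ ht).2 h1.1.1, ?_⟩
      rw [mem_ofPred_eq, ht.tau_eq]
      exact h2
  have hdisj : Pairwise (Function.onFun Disjoint fun N =>
      A N ∩ shiftP N ⁻¹' (B ∩ Stay (half Z))) := by
    intro M N hMN
    exact Set.disjoint_left.2 fun w h h' =>
      hMN ((hAtau M w h.1 h.2.2).unique (hAtau N w h'.1 h'.2.2))
  rw [measure_congr e, measure_iUnion hdisj fun N => (hAdet N).measurableSet.inter
    (measurable_shiftP N (hB.inter (measurableSet_Stay _))), ← ENNReal.tsum_mul_right]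
  refine tsum_congr fun N => fresh_det hP (hAdet N) (fun x hx j hj hmem => ?_) hB
  have h1 := hx.2 j hj
  simp only [half, mem_ofPred_eq, map_sub] at hmem
  omega

lemma stay_ne_zero (hP : IsRWRE μ P)
    (hT : ∀ᵐ w ∂pathLaw P, Tendsto (fun n => Z (w n)) atTop atTop) :
    pathLaw P (Stay (half Z)) ≠ 0 := by
  have := isProb_pathLaw hP
  intro h0
  have hF : ∀ᵐ w ∂pathLaw P, False := by
    filter_upwards [hT, ae_unbdd_below hP h0] with w h1 h2
    obtain ⟨M, hM⟩ := (Filter.tendsto_atTop_atTop.1 h1) 0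
    obtain ⟨C, hC⟩ := ((Set.finite_Iic M).image fun k => Z (w k)).bddBelow
    obtain ⟨n, hn⟩ := h2 (min C 0)
    rcases le_total n M with h | h
    · have := hC (mem_image_of_mem _ h)
      omega
    · have := hM n h
      omega
  exact hF.exists.elim fun _ h => h

lemma ae_infinite_RegS (hP : IsRWRE μ P)
    (hT : ∀ᵐ w ∂pathLaw P, Tendsto (fun n => Z (w n)) atTop atTop) :
    ∀ᵐ w ∂pathLaw P, (RegS Z w).Infinite := by
  filter_upwards [hT, ae_exists_regen hP Z (H := half Z) subset_rfl (stay_ne_zero hP hT)]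
    with w h1 h2
  refine Set.infinite_of_forall_exists_gt fun a => ?_
  obtain ⟨N, hN, hr⟩ := h2 (fun M => (h1.eventually_ge_atTop M).exists) (a + 1)
  exact ⟨N, hr, by omega⟩

end RegTimes

/-! ### The law of large numbers for transient directions -/

noncomputable section Transient

variable {d : ℕ} {μ : Measure (EnvDist d)} {P : Measure (RWSpace d)} {Z : Site d →+ ℤ}

/-- Duration and height of the first excursion between regeneration times. -/
def incr (Z : Site d →+ ℤ) (w : PathSpace d) : ℕ × ℤ := (tau Z 1 w, Z (w (tau Z 1 w)))

lemma measurable_incr : Measurable (incr Z : PathSpace d → ℕ × ℤ) :=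
  (measurable_tau 1).prodMk ((measurable_of_countable Z).comp (measurable_eval (measurable_tau 1)))

/-- The increments between the `k`-th and the `(k+1)`-st regeneration times. -/
def inc (Z : Site d →+ ℤ) (k : ℕ) (w : PathSpace d) : ℕ × ℤ := incr Z (shiftP (tau Z k w) w)

lemma measurable_inc (k : ℕ) : Measurable (inc Z k : PathSpace d → ℕ × ℤ) :=
  measurable_incr.comp (measurable_shift_tau k)

lemma inc_eq {w : PathSpace d} (hw : (RegS Z w).Infinite) (k : ℕ) :
    inc Z k w = (tau Z (k + 1) w - tau Z k w, Z (w (tau Z (k + 1) w)) - Z (w (tau Z k w))) := by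
  rw [tau_add hw k 1]
  simp [inc, incr, shiftP]

lemma law_shift_tau (hP : IsRWRE μ P) (hinf : ∀ᵐ w ∂pathLaw P, (RegS Z w).Infinite) (k : ℕ)
    {B : Set (PathSpace d)} (hB : MeasurableSet B) :
    pathLaw P {w | shiftP (tau Z k w) w ∈ B} =
      (pathLaw P (Stay (half Z)))⁻¹ * pathLaw P (B ∩ Stay (half Z)) := by
  have := isProb_pathLaw hP
  obtain ⟨S, hS⟩ := renewal hP hinf k (F := univ) (by simp)
  have h1 := hS univ MeasurableSet.univ
  simp only [univ_inter, mem_univ, ofPred_true, measure_univ] at h1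
  have h2 := hS B hB
  rw [univ_inter] at h2
  rw [h2, ENNReal.eq_inv_of_mul_eq_one_left h1.symm]

lemma indep_inc (hP : IsRWRE μ P) (hinf : ∀ᵐ w ∂pathLaw P, (RegS Z w).Infinite) {j k : ℕ}
    (hjk : j < k) : IndepFun (inc Z j) (inc Z k) (pathLaw P) := by
  have := isProb_pathLaw hP
  rw [indepFun_iff_measure_inter_preimage_eq_mul]
  intro s t hs ht
  set F : Set (PathSpace d) := {w | ∃ M₁ M₂, IsTau Z j w M₁ ∧ IsTau Z (j + 1) w M₂ ∧
    (M₂ - M₁, Z (w M₂) - Z (w M₁)) ∈ s} with hFdef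
  have hFs : (F : Set (PathSpace d)) =ᵐ[pathLaw P] (inc Z j ⁻¹' s : Set (PathSpace d)) := by
    filter_upwards [hinf] with w hw
    apply propext
    change w ∈ F ↔ inc Z j w ∈ s
    rw [inc_eq hw]
    constructor
    · rintro ⟨M₁, M₂, h1, h2, h3⟩
      rwa [h1.tau_eq, h2.tau_eq]
    · exact fun h => ⟨_, _, isTau_tau hw j, isTau_tau hw (j + 1), h⟩
  have hF : ∀ w N, IsTau Z k w N → (w ∈ F ↔ stopP N w ∈ F) := by
    intro w N hN
    have hN' := (isTau_stopP hN.1 le_rfl k).2 hN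
    have ev : ∀ M ≤ N, stopP N w M = w M := fun M hM => by simp [stopP, hM]
    constructor
    · rintro ⟨M₁, M₂, h1, h2, h3⟩
      have l1 := h1.le hjk.le hN
      have l2 := h2.le hjk hN
      exact ⟨M₁, M₂, (isTau_stopP hN.1 l1 _).2 h1, (isTau_stopP hN.1 l2 _).2 h2, by
        rwa [ev _ l1, ev _ l2]⟩
    · rintro ⟨M₁, M₂, h1, h2, h3⟩
      have l1 := h1.le hjk.le hN'
      have l2 := h2.le hjk hN'
      exact ⟨M₁, M₂, (isTau_stopP hN.1 l1 _).1 h1, (isTau_stopP hN.1 l2 _).1 h2, by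
        rwa [ev _ l1, ev _ l2] at h3⟩
  obtain ⟨S, hS⟩ := renewal hP hinf k hF
  have h1 := hS univ MeasurableSet.univ
  simp only [univ_inter, mem_univ, ofPred_true, inter_univ] at h1
  have hB : MeasurableSet (incr Z ⁻¹' t : Set (PathSpace d)) := measurable_incr ht
  have h2 := hS _ hB
  have h3 := law_shift_tau hP hinf k hB
  have e1 : (inc Z k ⁻¹' t : Set (PathSpace d)) =
      {w | shiftP (tau Z k w) w ∈ (incr Z ⁻¹' t : Set (PathSpace d))} := rfl
  have hp : pathLaw P (Stay (half Z)) ≠ 0 := by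
    intro h0
    have := law_shift_tau hP hinf k MeasurableSet.univ
    simp [h0] at this
  rw [e1, ← measure_congr (hFs.inter (ae_eq_refl {w | shiftP (tau Z k w) w ∈ incr Z ⁻¹' t})),
    ← measure_congr hFs, h2, h1, h3, mul_assoc,
    ← mul_assoc (pathLaw P (Stay (half Z))), ENNReal.mul_inv_cancel hp (measure_ne_top _ _),
    one_mul]

/-- The strong law of large numbers for functions of the increments. -/
lemma slln_inc (hP : IsRWRE μ P) (hinf : ∀ᵐ w ∂pathLaw P, (RegS Z w).Infinite) (φ : ℕ × ℤ → ℝ)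
    (hint : Integrable (fun w => φ (inc Z 0 w)) (pathLaw P)) :
    ∀ᵐ w ∂pathLaw P, Tendsto (fun n : ℕ => (∑ i ∈ Finset.range n, φ (inc Z i w)) / n) atTop
      (𝓝 (∫ w, φ (inc Z 0 w) ∂pathLaw P)) := by
  have hφ : Measurable φ := measurable_of_countable φ
  refine strong_law_ae_real (fun k w => φ (inc Z k w)) hint ?_ ?_
  · intro j k hjk
    rcases lt_or_gt_of_ne hjk with h | h
    · exact (indep_inc hP hinf h).comp hφ hφ
    · exact ((indep_inc hP hinf h).comp hφ hφ).symm
  · intro k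
    have hid : IdentDistrib (inc Z k) (inc Z 0) (pathLaw P) (pathLaw P) := by
      refine ⟨(measurable_inc k).aemeasurable, (measurable_inc 0).aemeasurable, ?_⟩
      ext s hs
      rw [Measure.map_apply (measurable_inc k) hs, Measure.map_apply (measurable_inc 0) hs]
      exact (law_shift_tau hP hinf k (measurable_incr hs)).trans
        (law_shift_tau hP hinf 0 (measurable_incr hs)).symm
    exact hid.comp hφ

lemma exists_Rec_level {w : PathSpace d} (h0 : w 0 = 0)
    (hst : ∀ n, |Z (w (n + 1)) - Z (w n)| ≤ 1) (m : ℕ) (h : ∃ n, (m : ℤ) ≤ Z (w n)) :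
    ∃ N, w ∈ Rec Z N ∧ Z (w N) = m ∧ ∀ k < N, Z (w k) < m := by
  have hs := Nat.find_spec h
  have hlt : ∀ k < Nat.find h, Z (w k) < m := fun k hk => not_le.1 (Nat.find_min h hk)
  refine ⟨Nat.find h, fun k hk => (hlt k hk).trans_le hs, le_antisymm ?_ hs, hlt⟩
  rcases hN : Nat.find h with _ | N
  · rw [h0, map_zero]; omega
  · have a := hlt N (by omega)
    have b := abs_le.1 (hst N)
    omega

lemma ae_step_Z (hP : IsRWRE μ P) (hZ : ∀ i, |Z (stepVec d i)| ≤ 1) :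
    ∀ᵐ w ∂pathLaw P, ∀ n, |Z (w (n + 1)) - Z (w n)| ≤ 1 := by
  filter_upwards [ae_step hP] with w hw n
  obtain ⟨i, hi⟩ := hw n
  rw [hi, map_add, add_sub_cancel_left]
  exact hZ i

/-- The first regeneration after time `0` takes place above level `c`. -/
def highInc (Z : Site d →+ ℤ) (c : ℕ) : Set (PathSpace d) :=
  {w | ∃ n, IsTau Z 1 w n ∧ (c : ℤ) < Z (w n)}

lemma measurableSet_highInc (c : ℕ) : MeasurableSet (highInc (d := d) Z c) := by
  have : highInc (d := d) Z c = ⋃ n, ({w | IsTau Z 1 w n} ∩ {w | w n ∈ {z | (c : ℤ) < Z z}}) := by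
    ext w; simp [highInc]
  rw [this]
  exact MeasurableSet.iUnion fun n => (measurableSet_isTau 1 n).inter (measurableSet_coord n _)

/-- The tails of the height of an excursion sum to at most one: for fixed `M`, the events that the
last regeneration level not exceeding `M` equals `m` are disjoint. -/
lemma sum_highInc_le (hP : IsRWRE μ P) (hZ : ∀ i, |Z (stepVec d i)| ≤ 1)
    (hT : ∀ᵐ w ∂pathLaw P, Tendsto (fun n => Z (w n)) atTop atTop) (M : ℕ) :
    ∑ c ∈ Finset.range M, pathLaw P (highInc Z c ∩ Stay (half Z)) ≤ 1 := by
  have := isProb_pathLaw hP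
  set A : ℕ → ℕ → Set (PathSpace d) := fun m N => Rec Z N ∩ {w | Z (w N) = m} with hA
  have hAdet : ∀ m N, Det N (A m N) := fun m N => (det_Rec Z N).inter fun w w' h hw => by
    rw [mem_ofPred_eq, ← h N le_rfl]; exact hw
  have hAuniq : ∀ m N N' w, w ∈ A m N → w ∈ A m N' → N = N' := by
    intro m N N' w h h'
    have a : Z (w N) = m := h.2
    have b : Z (w N') = m := h'.2
    rcases lt_trichotomy N N' with hlt | rfl | hlt
    · have := h'.1 N hlt; omega
    · rfl
    · have := h.1 N' hlt; omega
  set C : ℕ → ℕ → Set (PathSpace d) := fun m N =>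
    A m N ∩ shiftP N ⁻¹' (highInc Z (M - 1 - m) ∩ Stay (half Z)) with hC
  have hCmeas : ∀ m N, MeasurableSet (C m N) := fun m N => (hAdet m N).measurableSet.inter
    (measurable_shiftP N ((measurableSet_highInc _).inter (measurableSet_Stay _)))
  have hE : ∀ m, pathLaw P (⋃ N, C m N) = pathLaw P (highInc Z (M - 1 - m) ∩ Stay (half Z)) := by
    intro m
    rw [measure_iUnion (fun N N' hne => Set.disjoint_left.2 fun w h h' =>
      hne (hAuniq m N N' w h.1 h'.1)) (hCmeas m)]
    have e : ∀ N, pathLaw P (C m N) =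
        pathLaw P (A m N) * pathLaw P (highInc Z (M - 1 - m) ∩ Stay (half Z)) := fun N =>
      fresh_det hP (hAdet m N) (fun x hx k hk hmem => by
        have h1 := hx.1 k hk
        simp only [half, mem_ofPred_eq, map_sub] at hmem
        omega) (measurableSet_highInc _)
    simp_rw [e]
    rw [ENNReal.tsum_mul_right, ← measure_iUnion (fun N N' hne => Set.disjoint_left.2 fun w h h' =>
      hne (hAuniq m N N' w h h')) fun N => (hAdet m N).measurableSet]
    have : pathLaw P (⋃ N, A m N) = 1 := by
      rw [← measure_univ (μ := pathLaw P)]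
      refine measure_congr ?_
      filter_upwards [hT, ae_start hP, ae_step_Z hP hZ] with w h1 h2 h3
      apply propext
      change w ∈ (⋃ N, A m N) ↔ w ∈ univ
      obtain ⟨N, a, b, -⟩ := exists_Rec_level h2 h3 m (h1.eventually_ge_atTop (m : ℤ)).exists
      exact ⟨fun _ => trivial, fun _ => mem_iUnion.2 ⟨N, a, b⟩⟩
    rw [this, one_mul]
  have hdisj : ∀ m m', m < M → m' < M → m < m' → Disjoint (⋃ N, C m N) (⋃ N, C m' N) := by
    intro m m' hm hm' hlt
    refine Set.disjoint_left.2 fun w h h' => ?_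
    obtain ⟨N, ⟨hr, hz⟩, ⟨n, hn, hc⟩, hs⟩ := mem_iUnion.1 h
    obtain ⟨N', ⟨hr', hz'⟩, -, hs'⟩ := mem_iUnion.1 h'
    have hz1 : Z (w N) = m := hz
    have hz2 : Z (w N') = m' := hz'
    have hreg : N ∈ RegS Z w := ⟨hr, hs⟩
    have hreg' : N' ∈ RegS Z w := ⟨hr', hs'⟩
    have hNN : N < N' := by
      rcases lt_trichotomy N N' with h | rfl | h
      · exact h
      · omega
      · have := hr N' h; omega
    have hmem : N' - N ∈ RegS Z (shiftP N w) := by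
      rw [mem_RegS_shiftP hreg, show N + (N' - N) = N' by omega]; exact hreg'
    have h0 : 0 ∈ RegS Z (shiftP N w) := by
      rw [mem_RegS_shiftP hreg, add_zero]; exact hreg
    have hle : n ≤ N' - N := by
      have c1 : Nat.count (· ∈ RegS Z (shiftP N w)) 1 = 1 := by
        rw [Nat.count_succ, Nat.count_zero, if_pos h0]
      have c2 : 1 ≤ Nat.count (· ∈ RegS Z (shiftP N w)) (N' - N) := by
        rw [← c1]
        exact Nat.count_monotone _ (by omega)
      exact IsTau.le c2 hn ⟨hmem, rfl⟩
    have h3 : N + n ∈ RegS Z w := (mem_RegS_shiftP hreg n).1 hn.1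
    have h4 := (mem_RegS.1 h3).2 N' (by omega)
    simp only [shiftP, map_sub] at hc
    omega
  rw [← Finset.sum_range_reflect]
  calc ∑ m ∈ Finset.range M, pathLaw P (highInc Z (M - 1 - m) ∩ Stay (half Z))
      = ∑ m ∈ Finset.range M, pathLaw P (⋃ N, C m N) :=
        Finset.sum_congr rfl fun m _ => (hE m).symm
    _ = pathLaw P (⋃ m ∈ Finset.range M, ⋃ N, C m N) := by
        refine (measure_biUnion_finset ?_ fun m _ => MeasurableSet.iUnion (hCmeas m)).symm
        intro m hm m' hm' hne
        have h1 := Finset.mem_range.1 (Finset.mem_coe.1 hm)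
        have h2 := Finset.mem_range.1 (Finset.mem_coe.1 hm')
        rcases lt_or_gt_of_ne hne with h | h
        · exact hdisj m m' h1 h2 h
        · exact (hdisj m' m h2 h1 h).symm
    _ ≤ 1 := MeasureTheory.prob_le_one

lemma integrable_height (hP : IsRWRE μ P) (hZ : ∀ i, |Z (stepVec d i)| ≤ 1)
    (hT : ∀ᵐ w ∂pathLaw P, Tendsto (fun n => Z (w n)) atTop atTop) :
    Integrable (fun w => ((inc Z 0 w).2 : ℝ)) (pathLaw P) := by
  have := isProb_pathLaw hP
  have hinf := ae_infinite_RegS hP hT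
  have hmeas : Measurable fun w : PathSpace d => ((inc Z 0 w).2 : ℝ) :=
    (measurable_of_countable fun q : ℕ × ℤ => (q.2 : ℝ)).comp (measurable_inc 0)
  refine ⟨hmeas.aestronglyMeasurable, ?_⟩
  set U : ℕ → Set (PathSpace d) := fun c => {w | shiftP (tau Z 0 w) w ∈ highInc Z c} with hU
  have hUm : ∀ c, MeasurableSet (U c) := fun c =>
    measurable_shift_tau 0 (measurableSet_highInc c)
  have hbound : ∀ᵐ w ∂pathLaw P, ‖((inc Z 0 w).2 : ℝ)‖ₑ ≤
      ∑' c, (U c).indicator (fun _ => (1 : ℝ≥0∞)) w := by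
    filter_upwards [hinf] with w hw
    have hw' := infinite_RegS_shiftP hw (isTau_tau hw 0).1
    have ht := isTau_tau hw' 1
    have hpos : 0 ≤ (inc Z 0 w).2 := by
      rw [inc_eq hw]
      have := (mem_RegS.1 (isTau_tau hw 0).1).2 (tau Z 1 w) (tau_strictMono hw zero_lt_one).le
      simp only [zero_add]
      omega
    obtain ⟨h, hh⟩ := Int.eq_ofNat_of_zero_le hpos
    have hmem : ∀ c ∈ Finset.range h, (U c).indicator (fun _ => (1 : ℝ≥0∞)) w = 1 := by
      intro c hc
      refine indicator_of_mem (show w ∈ U c from ⟨_, ht, ?_⟩) _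
      have : Z (shiftP (tau Z 0 w) w (tau Z 1 (shiftP (tau Z 0 w) w))) = h := hh
      rw [this]
      exact_mod_cast Finset.mem_range.1 hc
    calc ‖((inc Z 0 w).2 : ℝ)‖ₑ = h := by rw [hh]; simp
      _ = ∑ c ∈ Finset.range h, (U c).indicator (fun _ => (1 : ℝ≥0∞)) w := by
          rw [Finset.sum_congr rfl hmem]; simp
      _ ≤ _ := ENNReal.sum_le_tsum _
  have hsum : ∑' c, pathLaw P (U c) ≤ (pathLaw P (Stay (half Z)))⁻¹ := by
    have e : ∀ c, pathLaw P (U c) = (pathLaw P (Stay (half Z)))⁻¹ *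
        pathLaw P (highInc Z c ∩ Stay (half Z)) := fun c =>
      law_shift_tau hP hinf 0 (measurableSet_highInc c)
    simp_rw [e]
    rw [ENNReal.tsum_mul_left]
    refine (mul_le_mul' le_rfl ?_).trans (mul_one _).le
    exact ENNReal.tsum_le_of_sum_range_le (sum_highInc_le hP hZ hT)
  calc ∫⁻ w, ‖((inc Z 0 w).2 : ℝ)‖ₑ ∂pathLaw P
      ≤ ∫⁻ w, ∑' c, (U c).indicator (fun _ => (1 : ℝ≥0∞)) w ∂pathLaw P := lintegral_mono_ae hbound
    _ = ∑' c, pathLaw P (U c) := by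
        rw [lintegral_tsum fun c => (measurable_const.indicator (hUm c)).aemeasurable]
        refine tsum_congr fun c => ?_
        exact lintegral_indicator_one (hUm c)
    _ ≤ _ := hsum
    _ < ∞ := ENNReal.inv_lt_top.2 (pos_iff_ne_zero.2 (stay_ne_zero hP hT))

end Transient

noncomputable section TransientLimit

variable {d : ℕ} {μ : Measure (EnvDist d)} {P : Measure (RWSpace d)} {Z : Site d →+ ℤ}

/-- Convergence of `z n / n` follows from convergence along the times `t k` when `z` is sandwiched
between its values at consecutive such times. -/
lemma tendsto_div_of_interp {t : ℕ → ℕ} (ht : StrictMono t) {z : ℕ → ℝ} {h u : ℝ}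
    (hz : ∀ k n, t k ≤ n → n ≤ t (k + 1) → z (t k) ≤ z n ∧ z n ≤ z (t (k + 1)))
    (h0 : ∀ k, 0 ≤ z (t k)) (hh : Tendsto (fun k : ℕ => z (t k) / k) atTop (𝓝 h))
    (hu : Tendsto (fun k : ℕ => (k : ℝ) / t k) atTop (𝓝 u)) :
    Tendsto (fun n : ℕ => z n / n) atTop (𝓝 (h * u)) := by
  set κ : ℕ → ℕ := fun n => Nat.findGreatest (fun k => t k ≤ n) n with hκ
  have h1 : ∀ n, t 0 ≤ n → t (κ n) ≤ n := fun n hn =>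
    Nat.findGreatest_spec (P := fun k => t k ≤ n) (Nat.zero_le n) hn
  have h2 : ∀ n, n < t (κ n + 1) := by
    intro n
    by_contra hcon
    have a : κ n + 1 ≤ n := (ht.le_apply).trans (not_lt.1 hcon)
    have b : κ n + 1 ≤ κ n := Nat.le_findGreatest a (not_lt.1 hcon)
    omega
  have h3 : Tendsto κ atTop atTop := tendsto_atTop.2 fun K => by
    filter_upwards [eventually_ge_atTop (t K)] with n hn
    exact Nat.le_findGreatest ((ht.le_apply).trans hn) hn
  have hr : Tendsto (fun k : ℕ => (k : ℝ) / (k + 1)) atTop (𝓝 1) :=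
    tendsto_natCast_div_add_atTop (1 : ℝ)
  have hr' : Tendsto (fun k : ℕ => ((k : ℝ) + 1) / k) atTop (𝓝 1) := by
    simpa using hr.inv₀ one_ne_zero
  have hs : Tendsto (fun k : ℕ => ((k : ℝ) + 1) / t (k + 1)) atTop (𝓝 u) := by
    simpa [Function.comp_def] using hu.comp (tendsto_add_atTop_nat 1)
  have hs' : Tendsto (fun k : ℕ => z (t (k + 1)) / ((k : ℝ) + 1)) atTop (𝓝 h) := by
    simpa [Function.comp_def] using hh.comp (tendsto_add_atTop_nat 1)
  have htpos : ∀ k, 1 ≤ k → (0 : ℝ) < t k := fun k hk => by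
    have : k ≤ t k := ht.le_apply
    exact_mod_cast (by omega : 0 < t k)
  have hL : Tendsto (fun k : ℕ => z (t k) / t (k + 1)) atTop (𝓝 (h * u)) := by
    have := (hh.mul hr).mul hs
    rw [mul_one] at this
    refine this.congr' ?_
    filter_upwards [eventually_ge_atTop 1] with k hk
    have a : (0 : ℝ) < k := by exact_mod_cast hk
    have b := htpos (k + 1) (by omega)
    field_simp
  have hU : Tendsto (fun k : ℕ => z (t (k + 1)) / t k) atTop (𝓝 (h * u)) := by
    have := (hs'.mul hr').mul hu
    rw [mul_one] at this
    refine this.congr' ?_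
    filter_upwards [eventually_ge_atTop 1] with k hk
    have a : (0 : ℝ) < k := by exact_mod_cast hk
    have b := htpos k hk
    field_simp
  refine tendsto_of_tendsto_of_tendsto_of_le_of_le' (hL.comp h3) (hU.comp h3) ?_ ?_
  · filter_upwards [eventually_ge_atTop (t 0), eventually_ge_atTop 1] with n hn hn1
    have a := h1 n hn
    have b := h2 n
    have hn0 : (0 : ℝ) < n := by exact_mod_cast hn1
    calc z (t (κ n)) / t (κ n + 1) ≤ z (t (κ n)) / n :=
          div_le_div_of_nonneg_left (h0 _) hn0 (by exact_mod_cast b.le)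
      _ ≤ z n / n := by gcongr; exact (hz _ _ a b.le).1
  · filter_upwards [eventually_ge_atTop (t 0), h3.eventually_ge_atTop 1] with n hn hk
    have a := h1 n hn
    have b := h2 n
    have c := htpos _ hk
    calc z n / n ≤ z (t (κ n + 1)) / n := by gcongr; exact (hz _ _ a b.le).2
      _ ≤ z (t (κ n + 1)) / t (κ n) :=
          div_le_div_of_nonneg_left (h0 _) c (by exact_mod_cast a)

lemma sum_inc {w : PathSpace d} (hw : (RegS Z w).Infinite) (n : ℕ) :
    (∑ i ∈ Finset.range n, ((inc Z i w).1 : ℝ) = tau Z n w - tau Z 0 w) ∧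
    ∑ i ∈ Finset.range n, ((inc Z i w).2 : ℝ) = (Z (w (tau Z n w)) : ℝ) - Z (w (tau Z 0 w)) := by
  induction n with
  | zero => simp
  | succ n ih =>
    rw [Finset.sum_range_succ, Finset.sum_range_succ, ih.1, ih.2, inc_eq hw]
    have := (tau_strictMono hw (Nat.lt_succ_self n)).le
    constructor
    · push_cast [Nat.cast_sub this]
      ring
    · push_cast
      ring

/-- The proportion of regeneration times converges; the limit is zero if the time between
regenerations is not integrable. -/
lemma exists_rate (hP : IsRWRE μ P) (hinf : ∀ᵐ w ∂pathLaw P, (RegS Z w).Infinite) :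
    ∃ u : ℝ, ∀ᵐ w ∂pathLaw P, Tendsto (fun k : ℕ => (k : ℝ) / tau Z k w) atTop (𝓝 u) := by
  have := isProb_pathLaw hP
  have hmeas : ∀ φ : ℕ × ℤ → ℝ, Measurable fun w : PathSpace d => φ (inc Z 0 w) := fun φ =>
    (measurable_of_countable φ).comp (measurable_inc 0)
  by_cases hint : Integrable (fun w => ((inc Z 0 w).1 : ℝ)) (pathLaw P)
  · refine ⟨(∫ w, ((inc Z 0 w).1 : ℝ) ∂pathLaw P)⁻¹, ?_⟩
    filter_upwards [hinf, slln_inc hP hinf (fun q => (q.1 : ℝ)) hint] with w hw hs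
    have h1 : Tendsto (fun n : ℕ => (tau Z n w : ℝ) / n) atTop
        (𝓝 (∫ w, ((inc Z 0 w).1 : ℝ) ∂pathLaw P)) := by
      have h2 := hs.add (tendsto_const_div_atTop_nhds_zero_nat (tau Z 0 w : ℝ))
      rw [add_zero] at h2
      refine h2.congr fun n => ?_
      rw [(sum_inc hw n).1, ← add_div, sub_add_cancel]
    have hge : (1 : ℝ) ≤ ∫ w, ((inc Z 0 w).1 : ℝ) ∂pathLaw P := by
      refine ge_of_tendsto h1 ?_
      filter_upwards [eventually_ge_atTop 1] with n hn
      rw [one_le_div (by exact_mod_cast hn)]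
      exact_mod_cast (tau_strictMono hw).le_apply
    have := h1.inv₀ (by linarith)
    simpa using this
  · refine ⟨0, ?_⟩
    set e : ℕ → ℝ := fun C => ∫ w, min ((inc Z 0 w).1 : ℝ) C ∂pathLaw P with he
    have hbd : ∀ C : ℕ, Integrable (fun w => min ((inc Z 0 w).1 : ℝ) C) (pathLaw P) := fun C => by
      refine Integrable.of_bound (hmeas fun q => min (q.1 : ℝ) C).aestronglyMeasurable C ?_
      filter_upwards with w
      rw [Real.norm_of_nonneg (by positivity)]
      exact min_le_right _ _
    have hlim : ∀ᵐ w ∂pathLaw P, ∀ C : ℕ, Tendsto (fun n : ℕ =>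
        (∑ i ∈ Finset.range n, min ((inc Z i w).1 : ℝ) C) / n) atTop (𝓝 (e C)) :=
      ae_all_iff.2 fun C => slln_inc hP hinf (fun q => min (q.1 : ℝ) C) (hbd C)
    have hetop : ∀ R : ℝ, ∃ C, R < e C := by
      have h1 : Tendsto (fun C : ℕ => ∫⁻ w, ENNReal.ofReal (min ((inc Z 0 w).1 : ℝ) C) ∂pathLaw P)
          atTop (𝓝 (∫⁻ w, ENNReal.ofReal ((inc Z 0 w).1 : ℝ) ∂pathLaw P)) := by
        refine lintegral_tendsto_of_tendsto_of_monotone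
          (fun C => (hmeas fun q => min (q.1 : ℝ) C).ennreal_ofReal.aemeasurable) ?_ ?_
        · filter_upwards with w C C' hC
          exact ENNReal.ofReal_le_ofReal (min_le_min_left _ (by exact_mod_cast hC))
        · filter_upwards with w
          refine tendsto_const_nhds.congr' ?_
          filter_upwards [eventually_ge_atTop (inc Z 0 w).1] with C hC
          rw [min_eq_left (by exact_mod_cast hC)]
      have h2 : ∫⁻ w, ENNReal.ofReal ((inc Z 0 w).1 : ℝ) ∂pathLaw P = ∞ := by
        by_contra hne
        refine hint ⟨(hmeas fun q => (q.1 : ℝ)).aestronglyMeasurable, ?_⟩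
        refine (lt_of_le_of_lt (le_of_eq ?_) (lt_top_iff_ne_top.2 hne))
        refine lintegral_congr fun w => ?_
        rw [Real.enorm_of_nonneg (by positivity)]
      rw [h2] at h1
      intro R
      obtain ⟨C, hC⟩ := (h1.eventually_const_lt (ENNReal.ofReal_lt_top (r := R))).exists
      refine ⟨C, ?_⟩
      rw [← ofReal_integral_eq_lintegral_ofReal (hbd C)
        (by filter_upwards with w; exact le_min (Nat.cast_nonneg _) (Nat.cast_nonneg _))] at hC
      exact (ENNReal.ofReal_lt_ofReal_iff'.1 hC).1
    filter_upwards [hinf, hlim] with w hw hs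
    have hT : Tendsto (fun n : ℕ => (tau Z n w : ℝ) / n) atTop atTop := by
      refine tendsto_atTop.2 fun R => ?_
      obtain ⟨C, hC⟩ := hetop R
      filter_upwards [(hs C).eventually_const_lt hC] with n hn
      refine hn.le.trans ?_
      gcongr
      calc ∑ i ∈ Finset.range n, min ((inc Z i w).1 : ℝ) C
          ≤ ∑ i ∈ Finset.range n, ((inc Z i w).1 : ℝ) :=
            Finset.sum_le_sum fun i _ => min_le_left _ _
        _ = tau Z n w - tau Z 0 w := (sum_inc hw n).1
        _ ≤ tau Z n w := sub_le_self _ (Nat.cast_nonneg _)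
    exact hT.inv_tendsto_atTop.congr fun n => by simp

/-- If `Z` tends to infinity almost surely, then it has a deterministic asymptotic speed. -/
lemma exists_speed_of_transient (hP : IsRWRE μ P) (hZ : ∀ i, |Z (stepVec d i)| ≤ 1)
    (hT : ∀ᵐ w ∂pathLaw P, Tendsto (fun n => Z (w n)) atTop atTop) :
    ∃ v : ℝ, ∀ᵐ w ∂pathLaw P, Tendsto (fun n : ℕ => (Z (w n) : ℝ) / n) atTop (𝓝 v) := by
  have hinf := ae_infinite_RegS hP hT
  obtain ⟨u, hu⟩ := exists_rate hP hinf
  refine ⟨(∫ w, ((inc Z 0 w).2 : ℝ) ∂pathLaw P) * u, ?_⟩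
  filter_upwards [hinf, hu, ae_start hP,
    slln_inc hP hinf (fun q => (q.2 : ℝ)) (integrable_height hP hZ hT)] with w hw hu h0 hs
  refine tendsto_div_of_interp (t := fun k => tau Z k w) (z := fun n => (Z (w n) : ℝ))
    (tau_strictMono hw) ?_ ?_ ?_ hu
  · intro k n h1 h2
    have r1 := mem_RegS.1 (isTau_tau hw k).1
    have r2 := mem_RegS.1 (isTau_tau hw (k + 1)).1
    refine ⟨by exact_mod_cast r1.2 n h1, ?_⟩
    rcases h2.lt_or_eq with h | rfl
    · exact_mod_cast (r2.1 n h).le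
    · exact le_rfl
  · intro k
    have r := (mem_RegS.1 (isTau_tau hw k).1).1
    rcases Nat.eq_zero_or_pos (tau Z k w) with h | h
    · simp [h, h0]
    · have := r 0 h
      rw [h0, map_zero] at this
      exact_mod_cast this.le
  · have h2 := hs.add (tendsto_const_div_atTop_nhds_zero_nat (Z (w (tau Z 0 w)) : ℝ))
    rw [add_zero] at h2
    refine h2.congr fun n => ?_
    rw [(sum_inc hw n).2, ← add_div, sub_add_cancel]

end TransientLimit

/-! ### Excursions above a level -/

noncomputable section Excursions

variable {d : ℕ} {μ : Measure (EnvDist d)} {P : Measure (RWSpace d)} {Z : Site d →+ ℤ}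

/-- The walk `w` enters the half-space `{Z ≥ m}` at time `N`, through the hyperplane `{Z = m}`. -/
def Ent (Z : Site d →+ ℤ) (m : ℤ) (w : PathSpace d) (N : ℕ) : Prop :=
  1 ≤ N ∧ Z (w (N - 1)) < m ∧ Z (w N) = m

/-- The number of entries into `{Z ≥ m}` before time `N`. -/
def numEnt (Z : Site d →+ ℤ) (m : ℤ) (w : PathSpace d) (N : ℕ) : ℕ :=
  ((Finset.range N).filter (Ent Z m w)).card

/-- The event that the `k`-th entry into `{Z ≥ m}`, counted from `0`, occurs at time `N`. -/
def EntAt (Z : Site d →+ ℤ) (m : ℤ) (k N : ℕ) : Set (PathSpace d) :=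
  {w | Ent Z m w N ∧ numEnt Z m w N = k}

lemma Ent.congr {m : ℤ} {w w' : PathSpace d} {N t : ℕ} (h : ∀ k ≤ N, w k = w' k) (ht : t ≤ N) :
    Ent Z m w t ↔ Ent Z m w' t := by
  rw [Ent, Ent, h t ht, h (t - 1) (by omega)]

lemma numEnt_congr {m : ℤ} {w w' : PathSpace d} {N t : ℕ} (h : ∀ k ≤ N, w k = w' k)
    (ht : t ≤ N + 1) : numEnt Z m w t = numEnt Z m w' t := by
  unfold numEnt
  congr 1
  refine Finset.filter_congr fun s hs => Ent.congr h ?_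
  have := Finset.mem_range.1 hs
  omega

lemma det_EntAt (m : ℤ) (k N : ℕ) : Det N (EntAt Z m k N) := fun _ _ h hw =>
  ⟨(Ent.congr h le_rfl).1 hw.1, (numEnt_congr h (Nat.le_succ N)) ▸ hw.2⟩

lemma numEnt_lt {m : ℤ} {w : PathSpace d} {N N' : ℕ} (h : N' < N) (hE : Ent Z m w N') :
    numEnt Z m w N' < numEnt Z m w N := by
  refine Finset.card_lt_card ⟨?_, fun hsub => ?_⟩
  · exact Finset.filter_subset_filter _ (Finset.range_mono h.le)
  · have := hsub (Finset.mem_filter.2 ⟨Finset.mem_range.2 h, hE⟩)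
    simp at this

lemma disjoint_EntAt (m : ℤ) (k : ℕ) : Pairwise (Function.onFun Disjoint (EntAt Z m k)) := by
  intro N N' hne
  refine Set.disjoint_left.2 fun w hw hw' => ?_
  rcases lt_or_gt_of_ne hne with h | h
  · exact (numEnt_lt h hw.1).ne (hw.2.trans hw'.2.symm)
  · exact (numEnt_lt h hw'.1).ne (hw'.2.trans hw.2.symm)

/-- A visit to `{Z ≥ m}` belongs to an excursion started at some entry. -/
lemma exists_entry {m : ℤ} {w : PathSpace d} (h0 : Z (w 0) < m)
    (hst : ∀ n, |Z (w (n + 1)) - Z (w n)| ≤ 1) {t : ℕ} (ht : m ≤ Z (w t)) :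
    ∃ N ≤ t, Ent Z m w N ∧ ∀ u, N ≤ u → u ≤ t → m ≤ Z (w u) := by
  induction t with
  | zero => omega
  | succ t ih =>
    by_cases hm : m ≤ Z (w t)
    · obtain ⟨N, hN, hE, hu⟩ := ih hm
      refine ⟨N, by omega, hE, fun u h1 h2 => ?_⟩
      rcases h2.lt_or_eq with h | rfl
      · exact hu u h1 (by omega)
      · exact ht
    · refine ⟨t + 1, le_rfl, ⟨by omega, not_le.1 hm, ?_⟩, fun u h1 h2 => ?_⟩
      · have := abs_le.1 (hst t)
        omega
      · obtain rfl : u = t + 1 := by omega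
        exact ht

/-- `A` is contained in the event that `{Z ≥ m}` is reached, and membership in `A` is decided by
the path up to the first time at which this happens. -/
def AtHit (Z : Site d →+ ℤ) (m : ℤ) (A : Set (PathSpace d)) : Prop :=
  ∀ w ∈ A, (∃ n, m ≤ Z (w n)) ∧
    ∀ N w', m ≤ Z (w N) → (∀ k ≤ N, w k = w' k) → w' ∈ A

lemma AtHit.det {m : ℤ} {A B : Set (PathSpace d)} (hA : AtHit Z m A) {N : ℕ} (hB : Det N B)
    (hBm : ∀ w ∈ B, m ≤ Z (w N)) : Det N (A ∩ B) := fun w w' h hw =>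
  ⟨(hA w hw.1).2 N w' (hBm w hw.2) h, hB w w' h hw.2⟩

lemma AtHit.measurableSet {m : ℤ} {A : Set (PathSpace d)} (hA : AtHit Z m A) :
    MeasurableSet A := by
  have : A = ⋃ N, A ∩ {w | m ≤ Z (w N)} := by
    ext w
    simp only [mem_iUnion, mem_inter_iff, exists_and_left, mem_ofPred_eq]
    exact ⟨fun h => ⟨h, (hA w h).1⟩, fun h => h.1⟩
  rw [this]
  refine MeasurableSet.iUnion fun N =>
    (hA.det (N := N) (B := {w | m ≤ Z (w N)}) ?_ fun w hw => hw).measurableSet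
  intro w w' h hw
  simpa only [mem_ofPred_eq, ← h N le_rfl] using hw

lemma measurable_stayW_walk (n : ℕ) (K : ℕ → Set (Site d)) (N : ℕ) (z : Site d) :
    Measurable fun q : RWSpace d => stayW n K q.1 (q.2 N + z) := by
  have h1 : Measurable fun p : EnvOmega d × Site d => stayW n K p.1 p.2 :=
    measurable_from_prod_countable_left fun y => measurable_stayW n K y
  exact h1.comp (measurable_fst.prodMk
    (((measurable_coord N).comp measurable_snd).add measurable_const))

lemma map_withDensity_snd (f : RWSpace d → ℝ≥0∞) {S : Set (PathSpace d)} (hS : MeasurableSet S) :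
    ((P.withDensity f).map Prod.snd) S = ∫⁻ q in {q | q.2 ∈ S}, f q ∂P := by
  rw [Measure.map_apply measurable_snd hS, withDensity_apply _ (measurable_snd hS)]
  rfl

lemma setLIntegral_cyl_stayW (hP : IsRWRE μ P) (n : ℕ) (K : ℕ → Set (Site d)) (N : ℕ)
    (z : Site d) (x : PathSpace d) :
    ∫⁻ q in {q | q.2 ∈ cyl N x}, stayW n K q.1 (q.2 N + z) ∂P =
      (if x 0 = 0 then 1 else 0) *
        ∫⁻ ω, wE ω N x * stayW n K ω (x N + z) ∂(P.map Prod.fst) := by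
  rw [← setLIntegral_cyl hP N x (measurable_stayW n K _)]
  refine setLIntegral_congr_fun (measurableSet_snd (measurableSet_cyl N x)) fun q hq => ?_
  have : q.2 N = x N := hq N le_rfl
  simp only [this]

lemma markov_det (hP : IsRWRE μ P) (n : ℕ) (K : ℕ → Set (Site d)) {N : ℕ} {A : Set (PathSpace d)}
    (hA : Det N A) :
    pathLaw P (A ∩ {w | ∀ u ≤ n, w (N + u) ∈ K u}) ≤
      ∫⁻ q in {q | q.2 ∈ A}, stayW n K q.1 (q.2 N + 0) ∂P := by
  have hB : MeasurableSet {w : PathSpace d | ∀ u ≤ n, w (N + u) ∈ K u} := by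
    have : {w : PathSpace d | ∀ u ≤ n, w (N + u) ∈ K u} =
        ⋂ u ∈ Set.Iic n, {w : PathSpace d | w (N + u) ∈ K u} := by
      ext w; simp
    rw [this]
    exact MeasurableSet.biInter (Set.to_countable _) fun k _ => measurableSet_coord _ _
  have key := hA.measure_le (ρ₁ := (pathLaw P).restrict {w | ∀ u ≤ n, w (N + u) ∈ K u})
    (ρ₂ := (P.withDensity fun q => stayW n K q.1 (q.2 N + 0)).map Prod.snd) fun x _ => by
      rw [Measure.restrict_apply (measurableSet_cyl _ _), markov_cyl hP,
        map_withDensity_snd _ (measurableSet_cyl _ _), setLIntegral_cyl_stayW hP, add_zero]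
  rwa [Measure.restrict_apply hA.measurableSet, map_withDensity_snd _ hA.measurableSet] at key

/-- A walk at height `m` that has not been, above level `m`, within distance `n` of the point
`X_N + z` on the same hyperplane sees a fresh environment around this point. -/
lemma fresh_stayW (hP : IsRWRE μ P) {n N : ℕ} {m : ℤ} {z : Site d} (hz : Z z = 0)
    {A : Set (PathSpace d)} (hA : Det N A) (hm : ∀ x ∈ A, Z (x N) = m)
    (hx : ∀ x ∈ A, ∀ t < N, m ≤ Z (x t) → x t ∉ cube (x N + z) n) :
    ∫⁻ q in {q | q.2 ∈ A}, stayW n (fun _ => {y | m ≤ Z y}) q.1 (q.2 N + z) ∂P ≤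
      pathLaw P (box n fun _ => half Z) * pathLaw P A := by
  rw [← map_withDensity_snd _ hA.measurableSet, ← smul_eq_mul, ← Measure.smul_apply]
  refine hA.measure_le fun x hxA => ?_
  rw [map_withDensity_snd _ (measurableSet_cyl _ _), setLIntegral_cyl_stayW hP,
    Measure.smul_apply, smul_eq_mul, pathLaw_cyl hP, pathLaw_box hP,
    lintegral_mul_of_dependsOn hP.2.1 (S := (Finset.range N).image x)
      (T := (cube (x N + z) n).filter fun y => ∃ u, y ∈ (fun _ : ℕ => {y | m ≤ Z y}) u) ?_
      (measurable_wE N x) (measurable_stayW _ _ _) (wE_dependsOn N x) (stayW_dependsOn _ _ _),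
    lintegral_stayW_shift hP.2.1]
  · have : (fun _ : ℕ => {y : Site d | y + (x N + z) ∈ {y | m ≤ Z y}}) = fun _ => half Z := by
      funext _
      ext y
      simp [half, hz, hm x hxA]
    rw [this, ← mul_assoc, mul_comm]
  · refine Finset.disjoint_left.2 fun y hy hy' => ?_
    obtain ⟨k, hk, rfl⟩ := Finset.mem_image.1 hy
    obtain ⟨h1, u, hu⟩ := Finset.mem_filter.1 hy'
    exact hx x hxA k (Finset.mem_range.1 hk) hu h1

end Excursions

noncomputable section LongExcursions

variable {d : ℕ} {μ : Measure (EnvDist d)} {P : Measure (RWSpace d)} {Z : Site d →+ ℤ}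

/-- The quenched probability that a walk started at the position of the `k`-th entry into `{Z ≥ m}`,
translated by `z`, stays in `{Z ≥ m}` for `n` steps; zero if there is no such entry. -/
def entStay (Z : Site d →+ ℤ) (m : ℤ) (k n : ℕ) (z : Site d) (q : RWSpace d) : ℝ≥0∞ :=
  ∑' N, {q : RWSpace d | q.2 ∈ EntAt Z m k N}.indicator
    (fun q => stayW n (fun _ => {y | m ≤ Z y}) q.1 (q.2 N + z)) q

/-- The event that the walk stays in `{Z ≥ m}` for `r` steps after the `i`-th entry. -/
def LongExc (Z : Site d →+ ℤ) (m : ℤ) (i r : ℕ) : Set (PathSpace d) :=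
  ⋃ N, EntAt Z m i N ∩ {w | ∀ u ≤ r, w (N + u) ∈ {y | m ≤ Z y}}

/-- The event that the walk has not visited a site of `{Z ≥ m}` within distance `n` of `X_N + z`
before time `N`. -/
def Unseen (Z : Site d →+ ℤ) (m : ℤ) (n : ℕ) (z : Site d) (N : ℕ) : Set (PathSpace d) :=
  {w | ∀ t < N, m ≤ Z (w t) → w t ∉ cube (w N + z) n}

lemma measurableSet_LongExc (m : ℤ) (i r : ℕ) : MeasurableSet (LongExc Z m i r) := by
  refine MeasurableSet.iUnion fun N => (det_EntAt m i N).measurableSet.inter ?_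
  have : {w : PathSpace d | ∀ u ≤ r, w (N + u) ∈ {y | m ≤ Z y}} =
      ⋂ u ∈ Set.Iic r, {w : PathSpace d | w (N + u) ∈ {y | m ≤ Z y}} := by
    ext w; simp
  rw [this]
  exact MeasurableSet.biInter (Set.to_countable _) fun k _ => measurableSet_coord _ _

lemma LongExc_antitone (m : ℤ) (i : ℕ) : Antitone (LongExc Z m i) := fun _ _ h _ hw => by
  obtain ⟨N, hN⟩ := mem_iUnion.1 hw
  exact mem_iUnion.2 ⟨N, hN.1, fun u hu => hN.2 u (hu.trans h)⟩

lemma det_Unseen (m : ℤ) (n : ℕ) (z : Site d) (N : ℕ) : Det N (Unseen Z m n z N) :=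
  fun w w' h hw t ht hm => by
    rw [← h t ht.le] at hm ⊢
    rw [← h N le_rfl]
    exact hw t ht hm

lemma measurable_entStay (m : ℤ) (k n : ℕ) (z : Site d) : Measurable (entStay Z m k n z) :=
  Measurable.tsum fun N => (measurable_stayW_walk _ _ _ _).indicator
    (measurableSet_snd (det_EntAt m k N).measurableSet)

lemma entStay_antitone (m : ℤ) (k : ℕ) (z : Site d) (q : RWSpace d) :
    Antitone fun n => entStay Z m k n z q := fun _ _ h =>
  ENNReal.tsum_le_tsum fun _ => indicator_le_indicator (stayW_antitone _ _ _ h)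

lemma entStay_eq {m : ℤ} {k N : ℕ} (n : ℕ) (z : Site d) {q : RWSpace d}
    (h : q.2 ∈ EntAt Z m k N) :
    entStay Z m k n z q = stayW n (fun _ => {y | m ≤ Z y}) q.1 (q.2 N + z) := by
  rw [entStay, tsum_eq_single N fun N' hN' => indicator_of_notMem (fun h' => ?_) _]
  · exact indicator_of_mem (s := {q : RWSpace d | q.2 ∈ EntAt Z m k N}) h _
  · exact Set.disjoint_left.1 (disjoint_EntAt m k hN') h' h

lemma setLIntegral_tsum_indicator (A : Set (PathSpace d)) {E : ℕ → Set (PathSpace d)}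
    (hE : ∀ N, MeasurableSet (E N)) {g : ℕ → RWSpace d → ℝ≥0∞}
    (hg : ∀ N, Measurable (g N)) :
    ∫⁻ q in {q | q.2 ∈ A}, ∑' N, {q : RWSpace d | q.2 ∈ E N}.indicator (g N) q ∂P =
      ∑' N, ∫⁻ q in {q | q.2 ∈ A ∩ E N}, g N q ∂P := by
  rw [lintegral_tsum fun N => ((hg N).indicator (measurableSet_snd (hE N))).aemeasurable]
  congr 1
  funext N
  rw [lintegral_indicator (measurableSet_snd (hE N)), Measure.restrict_restrict
    (measurableSet_snd (hE N)), inter_comm]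
  rfl

/-- The Markov property at the `i`-th entry time. -/
lemma measure_inter_LongExc_le (hP : IsRWRE μ P) {m : ℤ} {A : Set (PathSpace d)}
    (hA : AtHit Z m A) (i r : ℕ) :
    pathLaw P (A ∩ LongExc Z m i r) ≤ ∫⁻ q in {q | q.2 ∈ A}, entStay Z m i r 0 q ∂P := by
  unfold entStay
  rw [setLIntegral_tsum_indicator A (fun N => (det_EntAt m i N).measurableSet)
    fun N => measurable_stayW_walk _ _ _ _, LongExc, inter_iUnion]
  refine (measure_iUnion_le _).trans (ENNReal.tsum_le_tsum fun N => ?_)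
  rw [← inter_assoc]
  exact markov_det hP r _ (hA.det (det_EntAt m i N) fun w hw => hw.1.2.2.ge)

/-- Either the surroundings of the `k`-th entry point are unseen, or they have been visited during
an earlier excursion. In the second case this excursion is long, or it was entered through a point
near the `k`-th entry point. -/
lemma entStay_le {m : ℤ} (hm : 1 ≤ m) {k r n n' : ℕ} (hn : n' ≤ n) {z : Site d} (hz : Z z = 0)
    {q : RWSpace d} (h0 : q.2 0 = 0) (hstep : ∀ n, ∃ i, q.2 (n + 1) = q.2 n + stepVec d i)
    (hst : ∀ n, |Z (q.2 (n + 1)) - Z (q.2 n)| ≤ 1) :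
    entStay Z m k n z q ≤
      ∑ i ∈ Finset.range k, {q : RWSpace d | q.2 ∈ LongExc Z m i r}.indicator 1 q +
      ∑ i ∈ Finset.range k, ∑ y ∈ (cube 0 (r + n')).filter fun y => Z y = 0,
        entStay Z m i n y q +
      ∑' N, {q : RWSpace d | q.2 ∈ EntAt Z m k N ∩ Unseen Z m n' z N}.indicator
        (fun q => stayW n' (fun _ => {y | m ≤ Z y}) q.1 (q.2 N + z)) q := by
  by_cases hE : ∃ N, q.2 ∈ EntAt Z m k N
  swap
  · have : entStay Z m k n z q = 0 :=
      ENNReal.tsum_eq_zero.2 fun N =>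
        indicator_of_notMem (s := {q : RWSpace d | q.2 ∈ EntAt Z m k N}) (fun h => hE ⟨N, h⟩) _
    rw [this]
    exact zero_le
  obtain ⟨N, hN⟩ := hE
  by_cases hU : q.2 ∈ Unseen Z m n' z N
  · refine le_add_left ?_
    rw [entStay_eq n z hN]
    refine (stayW_antitone _ _ _ hn).trans ((le_of_eq ?_).trans (ENNReal.le_tsum N))
    exact (indicator_of_mem (s := {q : RWSpace d | q.2 ∈ EntAt Z m k N ∩ Unseen Z m n' z N})
      ⟨hN, hU⟩ (fun q => stayW n' (fun _ => {y | m ≤ Z y}) q.1 (q.2 N + z))).symm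
  refine le_add_right ?_
  obtain ⟨t, htN, hmt, ht⟩ : ∃ t < N, m ≤ Z (q.2 t) ∧ q.2 t ∈ cube (q.2 N + z) n' := by
    simpa [Unseen] using hU
  obtain ⟨N', hN't, hE', hu⟩ := exists_entry (by rw [h0, map_zero]; omega) hst hmt
  have hi : numEnt Z m q.2 N' < k := hN.2 ▸ numEnt_lt (hN't.trans_lt htN) hE'
  have hEi : q.2 ∈ EntAt Z m (numEnt Z m q.2 N') N' := ⟨hE', rfl⟩
  by_cases hr : N' + r ≤ t
  · refine le_add_right ?_
    rw [entStay_eq n z hN]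
    refine (stayW_le_one _ _ _ _).trans ?_
    refine le_trans (le_of_eq ?_) (Finset.single_le_sum
      (f := fun i => {q : RWSpace d | q.2 ∈ LongExc Z m i r}.indicator 1 q)
      (fun _ _ => zero_le) (Finset.mem_range.2 hi))
    have : q.2 ∈ LongExc Z m (numEnt Z m q.2 N') r :=
      mem_iUnion.2 ⟨N', hEi, fun u hur => hu _ (by omega) (by omega)⟩
    exact (indicator_of_mem
      (s := {q : RWSpace d | q.2 ∈ LongExc Z m (numEnt Z m q.2 N') r}) this 1).symm
  · refine le_add_left ?_
    have hdist : ∀ s j, |q.2 (N' + s) j - q.2 N' j| ≤ s := by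
      intro s j
      induction s with
      | zero => simp
      | succ s ih =>
        obtain ⟨i, hi⟩ := hstep (N' + s)
        have h1 := abs_le.1 (abs_stepVec_le i j)
        rw [← add_assoc, hi, Pi.add_apply]
        rw [abs_le] at ih ⊢
        push_cast
        omega
    have hy : q.2 N + z - q.2 N' ∈ (cube 0 (r + n')).filter fun y => Z y = 0 := by
      refine Finset.mem_filter.2 ⟨mem_cube.2 fun j => ?_, ?_⟩
      · have h1 := mem_cube.1 ht j
        have h2 := hdist (t - N') j
        rw [Nat.add_sub_cancel' hN't] at h2
        rw [abs_le] at h1 h2 ⊢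
        simp only [Pi.add_apply, Pi.sub_apply, Pi.zero_apply] at h1 h2 ⊢
        push_cast
        omega
      · rw [map_sub, map_add, hN.1.2.2, hE'.2.2, hz]
        omega
    rw [entStay_eq n z hN]
    refine le_trans (le_of_eq ?_) ((Finset.single_le_sum
      (f := fun y => entStay Z m (numEnt Z m q.2 N') n y q) (fun _ _ => zero_le) hy).trans
      (Finset.single_le_sum (f := fun i => ∑ y ∈ (cube 0 (r + n')).filter fun y => Z y = 0,
        entStay Z m i n y q) (fun _ _ => zero_le) (Finset.mem_range.2 hi)))
    rw [entStay_eq n _ hEi, add_sub_cancel]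

/-- In unseen surroundings the mean probability to stay above the entry level for `n` steps is at
most that of a fresh walk. -/
lemma setLIntegral_unseen_le (hP : IsRWRE μ P) {m : ℤ} {A : Set (PathSpace d)}
    (hA : AtHit Z m A) (k n : ℕ) {z : Site d} (hz : Z z = 0) :
    ∫⁻ q in {q | q.2 ∈ A}, ∑' N,
      {q : RWSpace d | q.2 ∈ EntAt Z m k N ∩ Unseen Z m n z N}.indicator
        (fun q => stayW n (fun _ => {y | m ≤ Z y}) q.1 (q.2 N + z)) q ∂P ≤
      pathLaw P (box n fun _ => half Z) * pathLaw P A := by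
  have hdet : ∀ N, Det N (EntAt Z m k N ∩ Unseen Z m n z N) := fun N =>
    (det_EntAt m k N).inter (det_Unseen m n z N)
  rw [setLIntegral_tsum_indicator A (fun N => (hdet N).measurableSet)
    fun N => measurable_stayW_walk _ _ _ _]
  calc _ ≤ ∑' N, pathLaw P (box n fun _ => half Z) *
          pathLaw P (A ∩ (EntAt Z m k N ∩ Unseen Z m n z N)) :=
        ENNReal.tsum_le_tsum fun N => fresh_stayW hP hz
          (hA.det (hdet N) fun w hw => hw.1.1.2.2.ge) (fun w hw => hw.2.1.1.2.2)
          fun w hw => hw.2.2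
    _ = pathLaw P (box n fun _ => half Z) *
          pathLaw P (⋃ N, A ∩ (EntAt Z m k N ∩ Unseen Z m n z N)) := by
        rw [ENNReal.tsum_mul_left, measure_iUnion]
        · exact fun N N' h => (disjoint_EntAt m k h).mono (fun _ h => h.2.1) fun _ h => h.2.1
        · exact fun N => hA.measurableSet.inter (hdet N).measurableSet
    _ ≤ _ := by
        gcongr
        exact iUnion_subset fun N => inter_subset_left

/-- If the walk cannot stay in `{Z ≥ 0}` forever, then a long stay in `{Z ≥ m}` after the `k`-th
entry is unlikely, uniformly in the level `m` and given the path up to the hitting time of `m`. -/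
lemma exists_entStay_le (hP : IsRWRE μ P) (hZ : ∀ i, |Z (stepVec d i)| ≤ 1)
    (h0 : pathLaw P (Stay (half Z)) = 0) (k : ℕ) (z : Site d) (hz : Z z = 0) {ε : ℝ≥0∞}
    (hε : 0 < ε) :
    ∃ n, ∀ m : ℤ, 1 ≤ m → ∀ A, AtHit Z m A →
      ∫⁻ q in {q | q.2 ∈ A}, entStay Z m k n z q ∂P ≤ ε * pathLaw P A := by
  have := isProb_pathLaw hP
  induction k using Nat.strong_induction_on generalizing z ε with
  | _ k ih =>
  -- a common time for finitely many earlier excursions and translations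
  have common : ∀ (T : Finset (Site d)), (∀ y ∈ T, Z y = 0) → ∀ δ : ℝ≥0∞, 0 < δ →
      ∃ n₀, ∀ n, n₀ ≤ n → ∀ i < k, ∀ y ∈ T, ∀ m : ℤ, 1 ≤ m → ∀ A, AtHit Z m A →
        ∫⁻ q in {q | q.2 ∈ A}, entStay Z m i n y q ∂P ≤ δ * pathLaw P A := by
    intro T hT δ hδ
    have : ∀ᶠ n in atTop, ∀ i ∈ Finset.range k, ∀ y ∈ T, ∀ m : ℤ, 1 ≤ m → ∀ A, AtHit Z m A →
        ∫⁻ q in {q | q.2 ∈ A}, entStay Z m i n y q ∂P ≤ δ * pathLaw P A := by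
      rw [Finset.eventually_all]
      intro i hi
      rw [Finset.eventually_all]
      intro y hy
      obtain ⟨n₀, hn₀⟩ := ih i (Finset.mem_range.1 hi) y (hT y hy) hδ
      filter_upwards [eventually_ge_atTop n₀] with n hn m hm A hA
      exact (lintegral_mono fun q => entStay_antitone m i y q hn).trans (hn₀ m hm A hA)
    obtain ⟨n₀, hn₀⟩ := eventually_atTop.1 this
    exact ⟨n₀, fun n hn i hi => hn₀ n hn i (Finset.mem_range.2 hi)⟩
  have hε3 : 0 < ε / 3 := ENNReal.div_pos hε.ne' (by simp)
  have small : ∀ C : ℕ, ∃ δ : ℝ≥0∞, 0 < δ ∧ C * δ ≤ ε / 3 := fun C =>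
    ⟨ε / 3 / C, ENNReal.div_pos hε3.ne' (ENNReal.natCast_ne_top C), ENNReal.mul_div_le⟩
  obtain ⟨n', hn'⟩ : ∃ n, pathLaw P (box n fun _ => half Z) ≤ ε / 3 := by
    have h1 := tendsto_measure_box (pathLaw P) fun _ => half Z
    rw [show {w : PathSpace d | ∀ u, w u ∈ half Z} = Stay (half Z) from rfl, h0] at h1
    exact ((h1.eventually_lt_const hε3).exists).imp fun _ h => h.le
  obtain ⟨δ₁, hδ₁, hδ₁k⟩ := small k
  obtain ⟨r, hr⟩ := common {0} (by simp) δ₁ hδ₁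
  set U := (cube (0 : Site d) (r + n')).filter fun y => Z y = 0 with hU
  obtain ⟨δ₂, hδ₂, hδ₂k⟩ := small (k * U.card)
  obtain ⟨n₂, hn₂⟩ := common U (fun y hy => (Finset.mem_filter.1 hy).2) δ₂ hδ₂
  refine ⟨max n₂ n', fun m hm A hA => ?_⟩
  have hL : ∀ i, MeasurableSet {q : RWSpace d | q.2 ∈ LongExc Z m i r} := fun i =>
    measurableSet_snd (measurableSet_LongExc m i r)
  have hae := ae_of_ae_map measurable_snd.aemeasurable
    ((ae_start hP).and ((ae_step hP).and (ae_step_Z hP hZ)))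
  calc ∫⁻ q in {q | q.2 ∈ A}, entStay Z m k (max n₂ n') z q ∂P
      ≤ ∫⁻ q in {q | q.2 ∈ A}, (∑ i ∈ Finset.range k,
          {q : RWSpace d | q.2 ∈ LongExc Z m i r}.indicator 1 q +
          ∑ i ∈ Finset.range k, ∑ y ∈ U, entStay Z m i (max n₂ n') y q +
          ∑' N, {q : RWSpace d | q.2 ∈ EntAt Z m k N ∩ Unseen Z m n' z N}.indicator
            (fun q => stayW n' (fun _ => {y | m ≤ Z y}) q.1 (q.2 N + z)) q) ∂P := by
        refine lintegral_mono_ae (ae_restrict_of_ae ?_)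
        filter_upwards [hae] with q hq
        exact entStay_le hm (le_max_right _ _) hz hq.1 hq.2.1 hq.2.2
    _ = ∑ i ∈ Finset.range k, pathLaw P (A ∩ LongExc Z m i r) +
          ∑ i ∈ Finset.range k, ∑ y ∈ U,
            ∫⁻ q in {q | q.2 ∈ A}, entStay Z m i (max n₂ n') y q ∂P +
          ∫⁻ q in {q | q.2 ∈ A}, ∑' N,
            {q : RWSpace d | q.2 ∈ EntAt Z m k N ∩ Unseen Z m n' z N}.indicator
              (fun q => stayW n' (fun _ => {y | m ≤ Z y}) q.1 (q.2 N + z)) q ∂P := by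
        have m1 : Measurable fun q : RWSpace d => ∑ i ∈ Finset.range k,
            {q : RWSpace d | q.2 ∈ LongExc Z m i r}.indicator (1 : RWSpace d → ℝ≥0∞) q :=
          Finset.measurable_sum _ fun i _ => measurable_one.indicator (hL i)
        have m2 : Measurable fun q : RWSpace d => ∑ i ∈ Finset.range k, ∑ y ∈ U,
            entStay Z m i (max n₂ n') y q :=
          Finset.measurable_sum _ fun i _ => Finset.measurable_sum _ fun y _ =>
            measurable_entStay _ _ _ _
        have m12 : Measurable fun q : RWSpace d => ∑ i ∈ Finset.range k,
            {q : RWSpace d | q.2 ∈ LongExc Z m i r}.indicator (1 : RWSpace d → ℝ≥0∞) q +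
            ∑ i ∈ Finset.range k, ∑ y ∈ U, entStay Z m i (max n₂ n') y q := m1.add m2
        rw [lintegral_add_left m12, lintegral_add_left m1,
          lintegral_finsetSum _ fun i _ => measurable_one.indicator (hL i),
          lintegral_finsetSum _ fun i _ => Finset.measurable_sum _ fun y _ =>
            measurable_entStay _ _ _ _]
        congr 3
        · funext i
          rw [lintegral_indicator_one (hL i), Measure.restrict_apply (hL i), inter_comm,
            pathLaw_apply (hA.measurableSet.inter (measurableSet_LongExc m i r))]
          rfl
        · funext i
          exact lintegral_finsetSum _ fun y _ => measurable_entStay _ _ _ _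
    _ ≤ ∑ i ∈ Finset.range k, δ₁ * pathLaw P A +
          ∑ i ∈ Finset.range k, ∑ y ∈ U, δ₂ * pathLaw P A + ε / 3 * pathLaw P A := by
        refine add_le_add (add_le_add ?_ ?_) ?_
        · refine Finset.sum_le_sum fun i hi => ?_
          exact (measure_inter_LongExc_le hP hA i r).trans
            (hr r le_rfl i (Finset.mem_range.1 hi) 0 (by simp) m hm A hA)
        · refine Finset.sum_le_sum fun i hi => Finset.sum_le_sum fun y hy => ?_
          exact hn₂ _ (le_max_left _ _) i (Finset.mem_range.1 hi) y hy m hm A hA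
        · exact (setLIntegral_unseen_le hP hA k n' hz).trans (by gcongr)
    _ = (k * δ₁ + ((k * U.card : ℕ) : ℝ≥0∞) * δ₂ + ε / 3) * pathLaw P A := by
        simp only [Finset.sum_const, Finset.card_range, nsmul_eq_mul]
        push_cast
        ring
    _ ≤ (ε / 3 + ε / 3 + ε / 3) * pathLaw P A := by gcongr
    _ = ε * pathLaw P A := by rw [ENNReal.add_thirds]

end LongExcursions

/-! ### Sublinearity when no half-space is kept forever -/

noncomputable section Sublinear

variable {d : ℕ} {μ : Measure (EnvDist d)} {P : Measure (RWSpace d)} {Z : Site d →+ ℤ}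

/-- For large `L`, the first `K` excursions above level `m` are all shorter than `L` except with
probability `ε`, uniformly in `m` and given the path up to the hitting time of `m`. -/
lemma exists_LongExc_le (hP : IsRWRE μ P) (hZ : ∀ i, |Z (stepVec d i)| ≤ 1)
    (h0 : pathLaw P (Stay (half Z)) = 0) (K : ℕ) {ε : ℝ≥0∞} (hε : 0 < ε) :
    ∃ L, 1 ≤ L ∧ ∀ m : ℤ, 1 ≤ m → ∀ A, AtHit Z m A →
      pathLaw P (A ∩ ⋃ i ∈ Finset.range K, LongExc Z m i L) ≤ ε * pathLaw P A := by
  set δ : ℝ≥0∞ := ε / K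
  have hδ : 0 < δ := ENNReal.div_pos hε.ne' (ENNReal.natCast_ne_top K)
  have : ∀ᶠ L in atTop, ∀ i ∈ Finset.range K, ∀ m : ℤ, 1 ≤ m → ∀ A, AtHit Z m A →
      pathLaw P (A ∩ LongExc Z m i L) ≤ δ * pathLaw P A := by
    rw [Finset.eventually_all]
    intro i _
    obtain ⟨n, hn⟩ := exists_entStay_le hP hZ h0 i 0 (map_zero Z) hδ
    filter_upwards [eventually_ge_atTop n] with L hL m hm A hA
    exact (measure_mono (inter_subset_inter_right _ (LongExc_antitone m i hL))).trans
      ((measure_inter_LongExc_le hP hA i n).trans (hn m hm A hA))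
  obtain ⟨L, hL, hL1⟩ := (this.and (eventually_ge_atTop 1)).exists
  refine ⟨L, hL1, fun m hm A hA => ?_⟩
  rw [inter_iUnion₂]
  calc pathLaw P (⋃ i ∈ Finset.range K, A ∩ LongExc Z m i L)
      ≤ ∑ i ∈ Finset.range K, pathLaw P (A ∩ LongExc Z m i L) := measure_biUnion_finset_le _ _
    _ ≤ ∑ i ∈ Finset.range K, δ * pathLaw P A :=
        Finset.sum_le_sum fun i hi => hL i hi m hm A hA
    _ = K * δ * pathLaw P A := by simp [mul_assoc]
    _ ≤ ε * pathLaw P A := by gcongr; exact ENNReal.mul_div_le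

/-- The event that level `m + L` is reached after fewer than `K` entries into `{Z ≥ m}`. -/
def Fast (Z : Site d →+ ℤ) (m : ℤ) (L K : ℕ) : Set (PathSpace d) :=
  {w | ∃ n, m + L ≤ Z (w n) ∧ (∀ t < n, Z (w t) < m + L) ∧ numEnt Z m w (n + 1) < K}

/-- The climb from `m` to `m + L` takes place in a single excursion above `m`, which has to last at
least `L` steps since `Z` changes by at most one per step. -/
lemma mem_LongExc_of_Fast {m : ℤ} (hm : 1 ≤ m) {L K : ℕ} {w : PathSpace d} (h0 : w 0 = 0)
    (hst : ∀ n, |Z (w (n + 1)) - Z (w n)| ≤ 1) (hw : w ∈ Fast Z m L K) :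
    w ∈ ⋃ i ∈ Finset.range K, LongExc Z m i L := by
  obtain ⟨n, hn, -, hK⟩ := hw
  obtain ⟨N, hN, hE, hu⟩ := exists_entry (by rw [h0, map_zero]; omega) hst
    (show m ≤ Z (w n) by omega)
  have hgrow : ∀ s : ℕ, Z (w (N + s)) ≤ Z (w N) + s := by
    intro s
    induction s with
    | zero => simp
    | succ s ih =>
      have := abs_le.1 (hst (N + s))
      rw [← add_assoc]
      push_cast
      omega
  have hL : N + L ≤ n := by
    have := hgrow (n - N)
    rw [Nat.add_sub_cancel' hN, hE.2.2] at this
    omega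
  have hi : numEnt Z m w N < K := (numEnt_lt (by omega) hE).trans hK
  exact mem_iUnion₂.2 ⟨_, Finset.mem_range.2 hi,
    mem_iUnion.2 ⟨N, ⟨hE, rfl⟩, fun u hu' => hu _ (by omega) (by omega)⟩⟩

lemma atHit_Fast {m : ℤ} {L K : ℕ} {S : Finset ℕ} {l : ℕ → ℤ} (hl : ∀ i ∈ S, l i + L ≤ m) :
    AtHit Z m {w | (∃ n, m ≤ Z (w n)) ∧ ∀ i ∈ S, w ∈ Fast Z (l i) L K} := by
  intro w hw
  refine ⟨hw.1, fun N w' hN h => ⟨⟨N, h N le_rfl ▸ hN⟩, fun i hi => ?_⟩⟩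
  obtain ⟨n, h1, h2, h3⟩ := hw.2 i hi
  have hnN : n ≤ N := by
    by_contra hcon
    have := h2 N (not_le.1 hcon)
    have := hl i hi
    omega
  refine ⟨n, h n hnN ▸ h1, fun t ht => h t (ht.le.trans hnN) ▸ h2 t ht, ?_⟩
  rwa [← numEnt_congr h (by omega)]

/-- Fast crossings of separated strips occur no more often than independent events would. -/
lemma measure_Fast_le (hP : IsRWRE μ P) (hZ : ∀ i, |Z (stepVec d i)| ≤ 1) {η : ℝ≥0∞} {L K : ℕ}
    (hη : ∀ m : ℤ, 1 ≤ m → ∀ A, AtHit Z m A →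
      pathLaw P (A ∩ ⋃ i ∈ Finset.range K, LongExc Z m i L) ≤ η * pathLaw P A)
    (r : ℕ) (S : Finset ℕ) :
    pathLaw P {w | ∀ i ∈ S, w ∈ Fast Z (i * L + r + 1) L K} ≤ η ^ S.card := by
  have := isProb_pathLaw hP
  induction S using Finset.induction_on_max with
  | empty => simp
  | insert a S hS ih =>
    have haS : a ∉ S := fun h => (hS a h).false
    rw [Finset.card_insert_of_notMem haS, pow_succ']
    have hA : AtHit Z ((a : ℤ) * L + r + 1) {w | (∃ n, (a : ℤ) * L + r + 1 ≤ Z (w n)) ∧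
        ∀ i ∈ S, w ∈ Fast Z (i * L + r + 1) L K} := by
      refine atHit_Fast (l := fun i => (i : ℤ) * L + r + 1) fun i hi => ?_
      have h1 : (i : ℤ) + 1 ≤ a := by exact_mod_cast hS i hi
      have h2 : (0 : ℤ) ≤ L := Int.natCast_nonneg L
      nlinarith
    have hm : (1 : ℤ) ≤ (a : ℤ) * L + r + 1 := by
      have : (0 : ℤ) ≤ (a : ℤ) * L + r := by positivity
      omega
    refine le_trans (measure_mono_ae ?_) ((hη _ hm _ hA).trans ?_)
    · filter_upwards [ae_start hP, ae_step_Z hP hZ] with w hw0 hst hw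
      have hwa := hw a (Finset.mem_insert_self a S)
      refine ⟨⟨?_, fun i hi => hw i (Finset.mem_insert_of_mem hi)⟩,
        mem_LongExc_of_Fast hm hw0 hst hwa⟩
      obtain ⟨n, hn, -⟩ := hwa
      exact ⟨n, by omega⟩
    · gcongr
      exact (measure_mono fun w hw => hw.2).trans ih

/-- Almost surely, fewer than a quarter of the strips are crossed fast. -/
lemma ae_eventually_few_Fast (hP : IsRWRE μ P) (hZ : ∀ i, |Z (stepVec d i)| ≤ 1) {L K : ℕ}
    (hη : ∀ m : ℤ, 1 ≤ m → ∀ A, AtHit Z m A →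
      pathLaw P (A ∩ ⋃ i ∈ Finset.range K, LongExc Z m i L) ≤ (4⁻¹ : ℝ≥0∞) ^ 4 * pathLaw P A)
    (r : ℕ) :
    ∀ᵐ w ∂pathLaw P, ∀ᶠ q : ℕ in atTop,
      4 * ((Finset.range q).filter fun i : ℕ => w ∈ Fast Z (i * L + r + 1) L K).card < q := by
  have h := ae_eventually_notMem (μ := pathLaw P) (s := fun q : ℕ =>
    {w | q ≤ 4 * ((Finset.range q).filter fun i : ℕ => w ∈ Fast Z (i * L + r + 1) L K).card}) ?_
  · filter_upwards [h] with w hw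
    filter_upwards [hw] with q hq
    exact not_le.1 hq
  have hq : ∀ q : ℕ, pathLaw P
      {w | q ≤ 4 * ((Finset.range q).filter fun i : ℕ => w ∈ Fast Z (i * L + r + 1) L K).card} ≤
      (2⁻¹ : ℝ≥0∞) ^ q := by
    intro q
    set 𝒮 := (Finset.range q).powerset.filter fun S => q ≤ 4 * S.card with h𝒮
    calc _ ≤ pathLaw P (⋃ S ∈ 𝒮, {w | ∀ i ∈ S, w ∈ Fast Z (i * L + r + 1) L K}) := by
          refine measure_mono fun w hw => mem_iUnion₂.2 ⟨_, Finset.mem_filter.2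
            ⟨Finset.mem_powerset.2 (Finset.filter_subset _ _), hw⟩, fun i hi =>
              (Finset.mem_filter.1 hi).2⟩
      _ ≤ ∑ S ∈ 𝒮, pathLaw P {w | ∀ i ∈ S, w ∈ Fast Z (i * L + r + 1) L K} :=
          measure_biUnion_finset_le _ _
      _ ≤ ∑ S ∈ 𝒮, (4⁻¹ : ℝ≥0∞) ^ q := by
          refine Finset.sum_le_sum fun S hS => (measure_Fast_le hP hZ hη r S).trans ?_
          rw [← pow_mul]
          exact pow_le_pow_of_le_one zero_le (ENNReal.inv_le_one.2 (by norm_num))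
            (Finset.mem_filter.1 hS).2
      _ ≤ ∑ S ∈ (Finset.range q).powerset, (4⁻¹ : ℝ≥0∞) ^ q :=
          Finset.sum_le_sum_of_subset (Finset.filter_subset _ _)
      _ = (2 * 4⁻¹ : ℝ≥0∞) ^ q := by simp [mul_pow]
      _ = (2⁻¹ : ℝ≥0∞) ^ q := by
          congr 1
          rw [show (4 : ℝ≥0∞) = 2 * 2 by norm_num, ENNReal.mul_inv (by simp) (by simp), ← mul_assoc,
            ENNReal.mul_inv_cancel (by simp) (by simp), one_mul]
  refine ne_top_of_le_ne_top ?_ (ENNReal.tsum_le_tsum hq)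
  rw [ENNReal.tsum_geometric]
  simp

/-- Each time step is an entry for at most one level. -/
lemma sum_numEnt_le (w : PathSpace d) (L q n : ℕ) :
    ∑ p ∈ Finset.range L ×ˢ Finset.range q, numEnt Z (p.2 * L + p.1 + 1) w (n + 1) ≤ n := by
  have hdis : ∀ p ∈ Finset.range L ×ˢ Finset.range q, ∀ p' ∈ Finset.range L ×ˢ Finset.range q,
      p ≠ p' → Disjoint
        ((Finset.range (n + 1)).filter (Ent Z ((p.2 : ℤ) * L + p.1 + 1) w))
        ((Finset.range (n + 1)).filter (Ent Z ((p'.2 : ℤ) * L + p'.1 + 1) w)) := by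
    rintro ⟨r, i⟩ hp ⟨r', i'⟩ hp' hne
    refine Finset.disjoint_left.2 fun t ht ht' => hne ?_
    have h1 := (Finset.mem_filter.1 ht).2.2.2
    have h2 := (Finset.mem_filter.1 ht').2.2.2
    have hr := Finset.mem_range.1 (Finset.mem_product.1 hp).1
    have hr' := Finset.mem_range.1 (Finset.mem_product.1 hp').1
    simp only at h1 h2 hr hr'
    have e : i * L + r = i' * L + r' := by
      have : (i : ℤ) * L + r = i' * L + r' := by linarith
      exact_mod_cast this
    have hr0 : r = r' := by
      have := congrArg (· % L) e
      simpa [Nat.mul_add_mod_of_lt, Nat.add_mod, Nat.mod_eq_of_lt hr, Nat.mod_eq_of_lt hr']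
        using this
    subst hr0
    have hi : i = i' := Nat.eq_of_mul_eq_mul_right (by omega : 0 < L) (by omega)
    rw [hi]
  calc _ = ((Finset.range L ×ˢ Finset.range q).biUnion fun p =>
        (Finset.range (n + 1)).filter (Ent Z ((p.2 : ℤ) * L + p.1 + 1) w)).card :=
        (Finset.card_biUnion hdis).symm
    _ ≤ (Finset.Icc 1 n).card := by
        refine Finset.card_le_card (Finset.biUnion_subset.2 fun p _ t ht => ?_)
        have h1 := Finset.mem_range.1 (Finset.mem_filter.1 ht).1
        have h2 := (Finset.mem_filter.1 ht).2.1
        exact Finset.mem_Icc.2 ⟨h2, by omega⟩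
    _ = n := by simp

lemma le_numEnt_of_not_Fast {m : ℤ} {L K n : ℕ} {w : PathSpace d} (hn : m + L ≤ Z (w n))
    (hw : w ∉ Fast Z m L K) : K ≤ numEnt Z m w (n + 1) := by
  have hex : ∃ n, m + L ≤ Z (w n) := ⟨n, hn⟩
  have h1 := Nat.find_min' hex hn
  by_contra hcon
  refine hw ⟨Nat.find hex, Nat.find_spec hex, fun t ht => not_le.1 (Nat.find_min hex ht),
    lt_of_le_of_lt (Finset.card_le_card ?_) (not_le.1 hcon)⟩
  exact Finset.filter_subset_filter _ (Finset.range_mono (by omega))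

/-- If most strips are crossed slowly, then the walk takes a long time to climb. -/
lemma eventually_mul_le {w : PathSpace d} {c L : ℕ} (hc : 1 ≤ c) (hL : 1 ≤ L)
    (hw : ∀ r < L, ∀ᶠ q : ℕ in atTop, 4 * ((Finset.range q).filter fun i : ℕ =>
      w ∈ Fast Z (i * L + r + 1) L (4 * c)).card < q) :
    ∀ᶠ n : ℕ in atTop, c * Z (w n) ≤ n := by
  have hw' : ∀ᶠ q : ℕ in atTop, ∀ r ∈ Finset.range L, 4 * ((Finset.range q).filter fun i : ℕ =>
      w ∈ Fast Z (i * L + r + 1) L (4 * c)).card < q :=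
    (Finset.eventually_all _).2 fun r hr => hw r (Finset.mem_range.1 hr)
  obtain ⟨q₀, hq₀⟩ := eventually_atTop.1 hw'
  filter_upwards [eventually_ge_atTop (c * ((q₀ + 3) * L))] with n hn
  by_contra! hcon
  obtain ⟨H, hH⟩ : ∃ H : ℕ, Z (w n) = H := by
    refine ⟨(Z (w n)).toNat, (Int.toNat_of_nonneg ?_).symm⟩
    by_contra! hneg
    have : (c : ℤ) * Z (w n) ≤ 0 := mul_nonpos_of_nonneg_of_nonpos (by positivity) hneg.le
    omega
  have hcH : n < c * H := by rw [hH] at hcon; exact_mod_cast hcon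
  have hHL : (q₀ + 3) * L < H := lt_of_mul_lt_mul_left (hn.trans_lt hcH) (Nat.zero_le c)
  have hdiv : q₀ + 3 ≤ H / L := (Nat.le_div_iff_mul_le (by omega)).2 hHL.le
  obtain ⟨q, hq⟩ : ∃ q, H / L = q + 1 := ⟨H / L - 1, by omega⟩
  have hq1 : (q + 1) * L ≤ H := hq ▸ Nat.div_mul_le_self H L
  have hq2 : H < (q + 2) * L := by
    have := Nat.lt_mul_div_succ H (by omega : 0 < L)
    rw [hq] at this
    linarith
  have hlow : 3 * c * q * L ≤ n := by
    refine le_trans ?_ (sum_numEnt_le (Z := Z) w L q n)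
    rw [Finset.sum_product]
    calc 3 * c * q * L = ∑ r ∈ Finset.range L, 3 * c * q := by simp [mul_comm]
      _ ≤ _ := Finset.sum_le_sum fun r hr => ?_
    have h1 := hq₀ q (by omega) r hr
    have h2 := Finset.card_filter_add_card_filter_not (s := Finset.range q)
      fun i : ℕ => w ∈ Fast Z (i * L + r + 1) L (4 * c)
    rw [Finset.card_range] at h2
    calc 3 * c * q ≤ ((Finset.range q).filter fun i : ℕ =>
          ¬ w ∈ Fast Z (i * L + r + 1) L (4 * c)).card * (4 * c) := by nlinarith
      _ = ∑ i ∈ (Finset.range q).filter fun i : ℕ =>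
          ¬ w ∈ Fast Z (i * L + r + 1) L (4 * c), 4 * c := by simp
      _ ≤ ∑ i ∈ (Finset.range q).filter fun i : ℕ =>
          ¬ w ∈ Fast Z (i * L + r + 1) L (4 * c), numEnt Z (i * L + r + 1) w (n + 1) := by
          refine Finset.sum_le_sum fun i hi => le_numEnt_of_not_Fast ?_ (Finset.mem_filter.1 hi).2
          have h3 := Finset.mem_range.1 (Finset.mem_filter.1 hi).1
          have h4 := Finset.mem_range.1 hr
          rw [hH]
          have : i * L + r + 1 + L ≤ H := by nlinarith
          exact_mod_cast this
      _ ≤ _ := Finset.sum_le_sum_of_subset (Finset.filter_subset _ _)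
  have : c * H < c * ((q + 2) * L) := Nat.mul_lt_mul_of_pos_left hq2 hc
  have hcL : c * L * (q + 2) ≤ c * L * (3 * q) := Nat.mul_le_mul_left _ (by omega)
  nlinarith

/-- A walk that cannot stay in `{Z ≥ 0}` forever has no positive upper speed. -/
lemma ae_eventually_mul_le (hP : IsRWRE μ P) (hZ : ∀ i, |Z (stepVec d i)| ≤ 1)
    (h0 : pathLaw P (Stay (half Z)) = 0) :
    ∀ᵐ w ∂pathLaw P, ∀ c : ℕ, 1 ≤ c → ∀ᶠ n : ℕ in atTop, c * Z (w n) ≤ n := by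
  rw [ae_all_iff]
  intro c
  have hpos : (0 : ℝ≥0∞) < 4⁻¹ ^ 4 := pos_iff_ne_zero.2 (pow_ne_zero _ (by simp))
  obtain ⟨L, hL1, hL⟩ := exists_LongExc_le hP hZ h0 (4 * c) hpos
  filter_upwards [ae_all_iff.2 fun r => ae_eventually_few_Fast hP hZ hL r] with w hw hc
  exact eventually_mul_le hc hL1 fun r _ => hw r

end Sublinear

/-! ### Existence of the velocity -/

noncomputable section Velocity

variable {d : ℕ} {μ : Measure (EnvDist d)} {P : Measure (RWSpace d)} {Z : Site d →+ ℤ}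

lemma tendsto_div_zero_of_bounded {z : ℕ → ℤ} {C : ℤ} (h : ∀ n, |z n| ≤ C) :
    Tendsto (fun n : ℕ => (z n : ℝ) / n) atTop (𝓝 0) := by
  refine squeeze_zero_norm (fun n => ?_) (tendsto_const_div_atTop_nhds_zero_nat (C : ℝ))
  rw [Real.norm_eq_abs, abs_div, Nat.abs_cast]
  gcongr
  exact_mod_cast h n

lemma tendsto_div_zero_of_mul_le {z : ℕ → ℤ}
    (h : ∀ c : ℕ, 1 ≤ c → ∀ᶠ n : ℕ in atTop, c * z n ≤ n)
    (h' : ∀ c : ℕ, 1 ≤ c → ∀ᶠ n : ℕ in atTop, c * -z n ≤ n) :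
    Tendsto (fun n : ℕ => (z n : ℝ) / n) atTop (𝓝 0) := by
  rw [Metric.tendsto_nhds]
  intro ε hε
  obtain ⟨c, hc⟩ := exists_nat_gt (1 / ε)
  have hc0 : (0 : ℝ) < c := (by positivity : 0 < 1 / ε).trans hc
  have hc1 : 1 ≤ c := by exact_mod_cast hc0
  filter_upwards [h c hc1, h' c hc1, eventually_ge_atTop 1] with n a b hn
  have hn0 : (0 : ℝ) < n := by exact_mod_cast hn
  have a' : (c : ℝ) * z n ≤ n := by exact_mod_cast a
  have b' : (c : ℝ) * -z n ≤ n := by exact_mod_cast b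
  have hz : c * |(z n : ℝ)| ≤ n := by
    rcases abs_cases (z n : ℝ) with ⟨e, _⟩ | ⟨e, _⟩ <;> rw [e] <;> assumption
  rw [Real.dist_eq, sub_zero, abs_div, Nat.abs_cast, div_lt_iff₀ hn0]
  rw [div_lt_iff₀ hε] at hc
  nlinarith [mul_lt_mul_of_pos_right hc hn0]

/-- A `0`-`1` law for `Z → ∞` implies that `Z (X_n) / n` converges to a constant. -/
lemma exists_speed (hP : IsRWRE μ P) (hZ : ∀ i, |Z (stepVec d i)| ≤ 1)
    (h01 : (∀ᵐ w ∂pathLaw P, ¬ Tendsto (fun n => Z (w n)) atTop atTop) ∨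
      ∀ᵐ w ∂pathLaw P, Tendsto (fun n => Z (w n)) atTop atTop) :
    ∃ v : ℝ, ∀ᵐ w ∂pathLaw P, Tendsto (fun n : ℕ => (Z (w n) : ℝ) / n) atTop (𝓝 v) := by
  have hZ' : ∀ i, |(-Z) (stepVec d i)| ≤ 1 := fun i => by
    rw [AddMonoidHom.neg_apply, abs_neg]; exact hZ i
  rcases behaviour hP Z with h | h | h | ⟨h, h'⟩
  · refine ⟨0, ?_⟩
    filter_upwards [h] with w ⟨C, hC⟩
    exact tendsto_div_zero_of_bounded hC
  · exact exists_speed_of_transient hP hZ (h01.resolve_left h)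
  · obtain ⟨v, hv⟩ := exists_speed_of_transient hP hZ' h
    refine ⟨-v, ?_⟩
    filter_upwards [hv] with w hw
    refine hw.neg.congr fun n => ?_
    rw [AddMonoidHom.neg_apply, Int.cast_neg, neg_div, neg_neg]
  · refine ⟨0, ?_⟩
    filter_upwards [ae_eventually_mul_le hP hZ h, ae_eventually_mul_le hP hZ' h'] with w a b
    exact tendsto_div_zero_of_mul_le a b

lemma measurableSet_tendsto_atTop (j : Fin d) :
    MeasurableSet {w : PathSpace d | Tendsto (fun n => ((w n j : ℤ) : ℝ)) atTop atTop} :=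
  measurableSet_tendsto atTop fun n =>
    (measurable_of_countable fun z : Site d => ((z j : ℤ) : ℝ)).comp (measurable_coord n)

lemma exists_speed_coord (hP : IsRWRE μ P) (j : Fin d)
    (h01 : P {q : RWSpace d | Tendsto (fun n => ((q.2 n j : ℤ) : ℝ)) atTop atTop} = 0 ∨
      P {q : RWSpace d | Tendsto (fun n => ((q.2 n j : ℤ) : ℝ)) atTop atTop} = 1) :
    ∃ v : ℝ, ∀ᵐ w ∂pathLaw P, Tendsto (fun n : ℕ => ((w n j : ℤ) : ℝ) / n) atTop (𝓝 v) := by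
  have := isProb_pathLaw hP
  have hm := measurableSet_tendsto_atTop j
  refine exists_speed (Z := Pi.evalAddMonoidHom (fun _ => ℤ) j) hP (fun i => abs_stepVec_le i j) ?_
  have e := pathLaw_apply (P := P) hm
  simp only [mem_ofPred_eq] at e
  rw [← e] at h01
  refine h01.imp (fun h => ?_) fun h => ?_
  · filter_upwards [measure_eq_zero_iff_ae_notMem.1 h] with w hw hw'
    exact hw (tendsto_intCast_atTop_iff.2 hw')
  · filter_upwards [(mem_ae_iff_prob_eq_one hm).2 h] with w hw
    exact tendsto_intCast_atTop_iff.1 hw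

end Velocity

/-- if `P(A₊(e_j)) ∈ {0,1}` for each coordinate direction `e_j`, then a
deterministic velocity `v` exists: `P`-a.s. `X_n/n → v`. -/
theorem stmt12 {d : ℕ} (hd : 2 ≤ d) (μ : Measure (EnvDist d))
    (P : Measure (RWSpace d)) (hP : IsRWRE μ P)
    (h01 : ∀ j : Fin d,
      P {q : RWSpace d | Tendsto (fun n => ((q.2 n j : ℤ) : ℝ)) atTop atTop} = 0 ∨
      P {q : RWSpace d | Tendsto (fun n => ((q.2 n j : ℤ) : ℝ)) atTop atTop} = 1) :
    ∃ v : Fin d → ℝ,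
      P {q : RWSpace d |
        Tendsto (fun n : ℕ => (n : ℝ)⁻¹ • (fun i => ((q.2 n i : ℤ) : ℝ))) atTop (𝓝 v)} = 1 := by
  choose v hv using fun j => exists_speed_coord hP j (h01 j)
  have := hP.1
  refine ⟨v, ?_⟩
  have h : ∀ᵐ q ∂P, Tendsto (fun n : ℕ => (n : ℝ)⁻¹ • (fun i => ((q.2 n i : ℤ) : ℝ)))
      atTop (𝓝 v) := by
    filter_upwards [ae_of_ae_map measurable_snd.aemeasurable (ae_all_iff.2 hv)] with q hq
    refine tendsto_pi_nhds.2 fun j => (hq j).congr fun n => ?_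
    rw [Pi.smul_apply, smul_eq_mul, inv_mul_eq_div]
  exact (measure_congr (eventuallyEq_univ.2 h)).trans measure_univ
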